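/- arXiv:1806.10539 — 10 statements merged into one kernel-verified Lean document; each statement's English description precedes it below -/
import Mathlib

section
/- Fix E₀ > 0 and let φ : ℝ → ℝ be continuous and nonnegative, with φ(x) = 0 for x < 0, and suppose there exists δ ∈ (0,1] with φ(x) > 0 for all x ∈ (0, δ). For κ ∈ {−1/2, 1/2} and V ∈ (0, E₀) define ξ_κ(V) = (4π/V) ∫_V^{E₀} φ(1 − E/E₀)(E²/V² − 1)^κ dE. Then for κ ∈ {−1/2, 1/2} the ratio ξ_{κ+1}(V)/ξ_κ(V) tends to 0 as V → E₀ from the left. -/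
open MeasureTheory Filter Topology

/-- First claim of Lemma 4.3: `ξ_{κ+1}(V)/ξ_κ(V) → 0` as `V → E₀⁻`,
for `κ ∈ {-1/2, 1/2}`. -/
theorem stmt_4 (E₀ : ℝ) (hE₀ : 0 < E₀) (φ : ℝ → ℝ)
    (hcont : Continuous φ) (hnn : ∀ x, 0 ≤ φ x) (hzero : ∀ x < (0 : ℝ), φ x = 0)
    (δ : ℝ) (hδ : δ ∈ Set.Ioc (0 : ℝ) 1) (hpos : ∀ x ∈ Set.Ioo (0 : ℝ) δ, 0 < φ x)
    (ξ : ℝ → ℝ → ℝ)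
    (hξ : ∀ κ V, ξ κ V =
      (4 * Real.pi / V) * ∫ E in V..E₀, φ (1 - E / E₀) * (E ^ 2 / V ^ 2 - 1) ^ κ) :
    ∀ κ ∈ ({-1/2, 1/2} : Set ℝ),
      Tendsto (fun V => ξ (κ + 1) V / ξ κ V) (nhdsWithin E₀ (Set.Iio E₀)) (nhds 0) := by
  intro κ _
  have hlim : Tendsto (fun V : ℝ => E₀ ^ 2 / V ^ 2 - 1) (nhdsWithin E₀ (Set.Iio E₀)) (nhds 0) := by
    have h : ContinuousAt (fun V : ℝ => E₀ ^ 2 / V ^ 2 - 1) E₀ := by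
      have : E₀ ^ 2 ≠ 0 := by positivity
      fun_prop (disch := assumption)
    have h2 := h.tendsto
    have h3 : E₀ ^ 2 / E₀ ^ 2 - 1 = 0 := by
      rw [div_self (by positivity)]; ring
    simp only [h3] at h2
    exact h2.mono_left nhdsWithin_le_nhds
  have hev : ∀ᶠ V in nhdsWithin E₀ (Set.Iio E₀), 0 < V ∧ V < E₀ := by
    filter_upwards [Ioo_mem_nhdsLT hE₀] with V hV using hV
  have key : ∀ V, 0 < V → V < E₀ →
      0 ≤ ξ (κ + 1) V / ξ κ V ∧ ξ (κ + 1) V / ξ κ V ≤ E₀ ^ 2 / V ^ 2 - 1 := by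
    intro V hV hVE
    have hc : 0 ≤ E₀ ^ 2 / V ^ 2 - 1 := by
      rw [sub_nonneg, le_div_iff₀ (by positivity)]
      nlinarith
    have hg : ∀ E ∈ Set.Ioc V E₀, 0 < E ^ 2 / V ^ 2 - 1 := by
      intro E hE
      rw [sub_pos, lt_div_iff₀ (by positivity)]
      nlinarith [hE.1]
    have ha : 4 * Real.pi / V ≠ 0 := by positivity
    rw [hξ, hξ, mul_div_mul_left _ _ ha]
    simp only [intervalIntegral.integral_of_le hVE.le]
    have hn : ∀ k : ℝ, 0 ≤ᵐ[volume.restrict (Set.Ioc V E₀)]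
        fun E => φ (1 - E / E₀) * (E ^ 2 / V ^ 2 - 1) ^ k := by
      intro k
      filter_upwards [ae_restrict_mem measurableSet_Ioc] with E hE
      exact mul_nonneg (hnn _) (Real.rpow_nonneg (hg E hE).le _)
    have h0 := integral_nonneg_of_ae (hn κ)
    have h1 := integral_nonneg_of_ae (hn (κ + 1))
    refine ⟨div_nonneg h1 h0, ?_⟩
    by_cases hi : Integrable (fun E => φ (1 - E / E₀) * (E ^ 2 / V ^ 2 - 1) ^ κ)
        (volume.restrict (Set.Ioc V E₀))
    · refine div_le_of_le_mul₀ h0 hc ?_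
      rw [← integral_const_mul]
      refine integral_mono_of_nonneg (hn (κ + 1)) (hi.const_mul _) ?_
      filter_upwards [ae_restrict_mem measurableSet_Ioc] with E hE
      have hgE := hg E hE
      rw [Real.rpow_add_one hgE.ne']
      have hle : E ^ 2 / V ^ 2 - 1 ≤ E₀ ^ 2 / V ^ 2 - 1 := by
        have : 0 < E := hV.trans hE.1
        have := hE.2
        gcongr
      have hp : 0 ≤ φ (1 - E / E₀) * (E ^ 2 / V ^ 2 - 1) ^ κ :=
        mul_nonneg (hnn _) (Real.rpow_nonneg hgE.le _)
      calc _ = (E ^ 2 / V ^ 2 - 1) * (φ (1 - E / E₀) * (E ^ 2 / V ^ 2 - 1) ^ κ) := by ring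
        _ ≤ _ := mul_le_mul_of_nonneg_right hle hp
    · rw [integral_undef hi, div_zero]
      exact hc
  refine tendsto_of_tendsto_of_tendsto_of_le_of_le' tendsto_const_nhds hlim ?_ ?_
  · filter_upwards [hev] with V hV using (key V hV.1 hV.2).1
  · filter_upwards [hev] with V hV using (key V hV.1 hV.2).2
end

section
/- Fix E₀ > 0, let n ∈ ℕ, and let φ : ℝ → ℝ be nonnegative, vanish on (−∞, 0), be real-analytic on [0,1], and satisfy φ^{(k)}(0) = 0 for 0 ≤ k ≤ n−1 and φ^{(n)}(0) > 0. For κ ∈ {−1/2, 1/2} define ξ_κ(V) = (4π/V) ∫_V^{E₀} φ(1 − E/E₀)(E²/V² − 1)^κ dE. Then there exists V* ∈ (0, E₀) such that for all V ∈ [V*, E₀) one has ξ_{1/2}(V)/ξ_{−1/2}(V) ≤ 101(E₀ + V)(E₀ − V) / (100(3 + 2n)V²). -/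
open MeasureTheory

open Filter Topology in
lemma aux_bounds (E₀ : ℝ) (hE₀ : 0 < E₀) (n : ℕ) (φ : ℝ → ℝ)
    (hanalytic : AnalyticOn ℝ φ (Set.Icc 0 1))
    (hder : ∀ k < n, iteratedDerivWithin k φ (Set.Icc (0 : ℝ) 1) 0 = 0)
    (hdern : 0 < iteratedDerivWithin n φ (Set.Icc (0 : ℝ) 1) 0) :
    ∃ b > 0, ∃ Vs ∈ Set.Ioo (0 : ℝ) E₀, ∀ E ∈ Set.Icc Vs E₀,
      0.996 * b * ((E₀ ^ 2 - E ^ 2) ^ n * E) ≤ φ (1 - E / E₀) ∧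
      φ (1 - E / E₀) ≤ 1.004 * b * ((E₀ ^ 2 - E ^ 2) ^ n * E) := by
  have hcd : ContDiffOn ℝ n φ (Set.Icc 0 1) :=
    hanalytic.contDiffOn (uniqueDiffOn_Icc_zero_one)
  have hT := taylor_isLittleO (convex_Icc (0:ℝ) 1) (Set.left_mem_Icc.2 zero_le_one) hcd
  set d := iteratedDerivWithin n φ (Set.Icc (0 : ℝ) 1) 0 with hd
  set a : ℝ := (n.factorial : ℝ)⁻¹ * d with ha
  have hapos : 0 < a := by positivity
  have hTe : ∀ x, taylorWithinEval φ n (Set.Icc 0 1) 0 x = a * x ^ n := by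
    intro x
    rw [taylor_within_apply, Finset.sum_range_succ, Finset.sum_eq_zero]
    · simp [ha, hd]; ring
    · intro k hk
      rw [hder k (Finset.mem_range.1 hk)]; simp
  have h1 := hT.def (show 0 < a / 1000 by positivity)
  have htend : Tendsto (fun E : ℝ => 1 - E / E₀) (𝓝[≤] E₀) (𝓝[Set.Icc 0 1] 0) := by
    apply tendsto_nhdsWithin_of_tendsto_nhds_of_eventually_within
    · have : Tendsto (fun E : ℝ => 1 - E / E₀) (𝓝 E₀) (𝓝 (1 - E₀ / E₀)) :=
        Continuous.tendsto (by fun_prop) _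
      rw [div_self hE₀.ne', sub_self] at this
      exact this.mono_left nhdsWithin_le_nhds
    · filter_upwards [self_mem_nhdsWithin, nhdsWithin_le_nhds (Ioi_mem_nhds hE₀)] with E h h'
      simp only [Set.mem_Iic, Set.mem_Ioi] at h h'
      have : E / E₀ ≤ 1 := (div_le_one hE₀).2 h
      have : 0 < E / E₀ := by positivity
      constructor <;> linarith
  have h2 := htend.eventually h1
  set P0 : ℝ := (E₀ * (E₀ + E₀)) ^ n * E₀ with hP0
  have hP0pos : 0 < P0 := by positivity
  have hp : Tendsto (fun E : ℝ => (E₀ * (E₀ + E)) ^ n * E) (𝓝[≤] E₀) (𝓝 P0) :=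
    (Continuous.tendsto (by fun_prop) E₀ : Tendsto (fun E : ℝ => (E₀ * (E₀ + E)) ^ n * E) (𝓝 E₀) _).mono_left nhdsWithin_le_nhds
  have h3 := hp.eventually (Ioo_mem_nhds (show 0.999 * P0 < P0 by linarith) (show P0 < 1.001 * P0 by linarith))
  have h4 : ∀ᶠ E in 𝓝[≤] E₀, 0.996 * (a / P0) * ((E₀ ^ 2 - E ^ 2) ^ n * E) ≤ φ (1 - E / E₀) ∧
      φ (1 - E / E₀) ≤ 1.004 * (a / P0) * ((E₀ ^ 2 - E ^ 2) ^ n * E) := by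
    filter_upwards [h2, h3, self_mem_nhdsWithin, nhdsWithin_le_nhds (Ioi_mem_nhds hE₀)] with E hA hB h h'
    simp only [Set.mem_Iic, Set.mem_Ioi] at h h'
    have hx : 0 ≤ 1 - E / E₀ := by
      have : E / E₀ ≤ 1 := (div_le_one hE₀).2 h
      linarith
    have hw : (E₀ ^ 2 - E ^ 2) ^ n * E = (1 - E / E₀) ^ n * ((E₀ * (E₀ + E)) ^ n * E) := by
      rw [← mul_assoc, ← mul_pow]; congr 2; field_simp; ring
    rw [hTe, sub_zero, Real.norm_eq_abs, Real.norm_eq_abs, abs_of_nonneg (pow_nonneg hx n)] at hA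
    rw [hw]
    set p := (E₀ * (E₀ + E)) ^ n * E
    set x := (1 - E / E₀) ^ n with hxn
    have hx0 : 0 ≤ x := pow_nonneg hx n
    have hq1 : 0.999 ≤ p / P0 := by rw [le_div_iff₀ hP0pos]; exact hB.1.le
    have hq2 : p / P0 ≤ 1.001 := by rw [div_le_iff₀ hP0pos]; exact hB.2.le
    have hax : 0 ≤ a * x := by positivity
    have e1 : 0.996 * (a / P0) * (x * p) = 0.996 * (a * x) * (p / P0) := by ring
    have e2 : 1.004 * (a / P0) * (x * p) = 1.004 * (a * x) * (p / P0) := by ring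
    rw [e1, e2]
    have := abs_le.1 hA
    constructor <;> nlinarith [mul_le_mul_of_nonneg_left hq1 hax, mul_le_mul_of_nonneg_left hq2 hax]
  rw [eventually_iff] at h4
  obtain ⟨l, hl, hl'⟩ := (mem_nhdsLE_iff_exists_mem_Ico_Ioc_subset (show E₀ / 2 < E₀ by linarith)).1 h4
  refine ⟨a / P0, by positivity, (l + E₀) / 2, ⟨by linarith [hl.1], by linarith [hl.2]⟩, ?_⟩
  intro E hE
  exact hl' ⟨by linarith [hE.1, hl.2], hE.2⟩

lemma aux_int (E₀ V : ℝ) (hV : 0 < V) (hVE : V < E₀) (f : ℝ → ℝ)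
    (hf : ContinuousOn f (Set.Icc V E₀)) :
    IntervalIntegrable (fun E => f E * (E ^ 2 / V ^ 2 - 1) ^ (-1/2 : ℝ)) volume V E₀ ∧
    IntervalIntegrable (fun E => f E * (E ^ 2 / V ^ 2 - 1) ^ (1/2 : ℝ)) volume V E₀ := by
  constructor
  · have h1 : IntervalIntegrable (fun E : ℝ => (E - V) ^ (-1/2 : ℝ)) volume V E₀ := by
      have := (intervalIntegral.intervalIntegrable_rpow' (a := 0) (b := E₀ - V)
        (r := -1/2) (by norm_num)).comp_sub_right V
      simpa using this
    have h2 : ContinuousOn (fun E => f E * ((E + V) / V ^ 2) ^ (-1/2 : ℝ)) (Set.uIcc V E₀) := by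
      rw [Set.uIcc_of_le hVE.le]
      refine hf.mul (ContinuousOn.rpow_const (by fun_prop) ?_)
      intro x hx
      left
      have : 0 < x := hV.trans_le hx.1
      positivity
    refine (h1.continuousOn_mul h2).congr ?_
    intro E hE
    rw [Set.uIoc_of_le hVE.le] at hE
    have h0 : 0 < E := hV.trans hE.1
    have : E ^ 2 / V ^ 2 - 1 = ((E + V) / V ^ 2) * (E - V) := by field_simp; ring
    simp only [this]
    rw [Real.mul_rpow (by positivity) (by linarith [hE.1])]
    ring
  · apply ContinuousOn.intervalIntegrable
    rw [Set.uIcc_of_le hVE.le]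
    exact hf.mul (ContinuousOn.rpow_const (by fun_prop) (fun x hx => Or.inr (by norm_num)))

lemma aux_id (E₀ V : ℝ) (hV : 0 < V) (hVE : V < E₀) (n : ℕ) :
    (2 * n + 3) * (∫ E in V..E₀, ((E₀ ^ 2 - E ^ 2) ^ n * E) * (E ^ 2 / V ^ 2 - 1) ^ (1/2 : ℝ)) =
    (E₀ ^ 2 / V ^ 2 - 1) *
      ∫ E in V..E₀, ((E₀ ^ 2 - E ^ 2) ^ n * E) * (E ^ 2 / V ^ 2 - 1) ^ (-1/2 : ℝ) := by
  obtain ⟨i1, i2⟩ := aux_int E₀ V hV hVE (fun E => (E₀ ^ 2 - E ^ 2) ^ n * E) (by fun_prop)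
  have key := intervalIntegral.integral_eq_sub_of_hasDerivAt_of_le (a := V) (b := E₀)
    (f := fun E => (E₀ ^ 2 - E ^ 2) ^ (n + 1) * (E ^ 2 / V ^ 2 - 1) ^ (1/2 : ℝ))
    (f' := fun E => (E₀ ^ 2 / V ^ 2 - 1) *
        (((E₀ ^ 2 - E ^ 2) ^ n * E) * (E ^ 2 / V ^ 2 - 1) ^ (-1/2 : ℝ)) -
      (2 * n + 3) * (((E₀ ^ 2 - E ^ 2) ^ n * E) * (E ^ 2 / V ^ 2 - 1) ^ (1/2 : ℝ)))
    hVE.le ?_ ?_ ((i1.const_mul _).sub (i2.const_mul _))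
  · rw [intervalIntegral.integral_sub (i1.const_mul _) (i2.const_mul _),
      intervalIntegral.integral_const_mul, intervalIntegral.integral_const_mul] at key
    have : V ^ 2 / V ^ 2 = 1 := div_self (by positivity)
    simp only [this, sub_self] at key
    rw [Real.zero_rpow (by norm_num), zero_pow (by omega)] at key
    linarith
  · exact ContinuousOn.mul (by fun_prop)
      (ContinuousOn.rpow_const (by fun_prop) (fun x hx => Or.inr (by norm_num)))
  · intro E hE
    have hs : 0 < E ^ 2 / V ^ 2 - 1 := by
      rw [sub_pos, one_lt_div (by positivity)]
      exact pow_lt_pow_left₀ hE.1 hV.le (by norm_num)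
    have d1 : HasDerivAt (fun E : ℝ => (E₀ ^ 2 - E ^ 2) ^ (n + 1))
        ((n + 1 : ℕ) * (E₀ ^ 2 - E ^ 2) ^ n * (-(2 * E))) E := by
      have := (((hasDerivAt_id E).pow 2).const_sub (E₀ ^ 2)).pow (n + 1)
      refine HasDerivAt.congr_deriv this ?_
      simp
    have d2 : HasDerivAt (fun E : ℝ => (E ^ 2 / V ^ 2 - 1) ^ (1/2 : ℝ))
        ((2 * E / V ^ 2) * (1/2) * (E ^ 2 / V ^ 2 - 1) ^ (-1/2 : ℝ)) E := by
      have := ((((hasDerivAt_id E).pow 2).div_const (V ^ 2)).sub_const 1).rpow_const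
        (p := 1/2) (Or.inl hs.ne')
      refine HasDerivAt.congr_deriv this ?_
      have e : (1/2 - 1 : ℝ) = -1/2 := by norm_num
      rw [e]
      simp
    refine (d1.mul d2).congr_deriv ?_
    have : (E ^ 2 / V ^ 2 - 1) ^ (1/2 : ℝ) =
        (E ^ 2 / V ^ 2 - 1) * (E ^ 2 / V ^ 2 - 1) ^ (-1/2 : ℝ) := by
      rw [show (1/2 : ℝ) = 1 + (-1/2) by norm_num, Real.rpow_add hs, Real.rpow_one]
    rw [this]
    generalize (E ^ 2 / V ^ 2 - 1) ^ (-1/2 : ℝ) = r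
    push_cast
    field_simp
    ring

/-- Second claim of Lemma 4.3: under the assumption (4.8) on the ansatz function φ,
there exists `V* ∈ (0, E₀)` with
`ξ_{1/2}(V)/ξ_{-1/2}(V) ≤ 101(E₀+V)(E₀-V)/(100(3+2n)V²)` for all `V ∈ [V*, E₀)`. -/
theorem stmt_5 (E₀ : ℝ) (hE₀ : 0 < E₀) (n : ℕ) (φ : ℝ → ℝ)
    (hnn : ∀ x, 0 ≤ φ x) (hzero : ∀ x < (0 : ℝ), φ x = 0)
    (hanalytic : AnalyticOn ℝ φ (Set.Icc 0 1))
    (hder : ∀ k < n, iteratedDerivWithin k φ (Set.Icc (0 : ℝ) 1) 0 = 0)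
    (hdern : 0 < iteratedDerivWithin n φ (Set.Icc (0 : ℝ) 1) 0)
    (ξ : ℝ → ℝ → ℝ)
    (hξ : ∀ κ V, ξ κ V =
      (4 * Real.pi / V) * ∫ E in V..E₀, φ (1 - E / E₀) * (E ^ 2 / V ^ 2 - 1) ^ κ) :
    ∃ Vs ∈ Set.Ioo (0 : ℝ) E₀, ∀ V ∈ Set.Ico Vs E₀,
      ξ (1/2) V / ξ (-1/2) V ≤
        101 * (E₀ + V) * (E₀ - V) / (100 * (3 + 2 * (n : ℝ)) * V ^ 2) := by
  obtain ⟨b, hb, Vs, hVs, hbd⟩ := aux_bounds E₀ hE₀ n φ hanalytic hder hdern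
  refine ⟨Vs, hVs, ?_⟩
  intro V hV
  have hV0 : 0 < V := hVs.1.trans_le hV.1
  have hVE : V < E₀ := hV.2
  have hcont : ContinuousOn (fun E => φ (1 - E / E₀)) (Set.Icc V E₀) := by
    refine hanalytic.continuousOn.comp (by fun_prop) ?_
    intro E hE
    have h0 : 0 < E := hV0.trans_le hE.1
    have : E / E₀ ≤ 1 := (div_le_one hE₀).2 hE.2
    have : 0 < E / E₀ := by positivity
    constructor <;> linarith
  obtain ⟨i1, i2⟩ := aux_int E₀ V hV0 hVE _ hcont
  obtain ⟨j1, j2⟩ := aux_int E₀ V hV0 hVE (fun E => (E₀ ^ 2 - E ^ 2) ^ n * E) (by fun_prop)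
  have hid := aux_id E₀ V hV0 hVE n
  have hs : ∀ E ∈ Set.Icc V E₀, 0 ≤ E ^ 2 / V ^ 2 - 1 := by
    intro E hE
    rw [sub_nonneg, one_le_div (by positivity)]
    exact pow_le_pow_left₀ hV0.le hE.1 2
  have up : (∫ E in V..E₀, φ (1 - E / E₀) * (E ^ 2 / V ^ 2 - 1) ^ (1/2 : ℝ)) ≤
      1.004 * b * ∫ E in V..E₀, ((E₀ ^ 2 - E ^ 2) ^ n * E) * (E ^ 2 / V ^ 2 - 1) ^ (1/2 : ℝ) := by
    rw [← intervalIntegral.integral_const_mul]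
    refine intervalIntegral.integral_mono_on hVE.le i2 (j2.const_mul _) ?_
    intro E hE
    rw [← mul_assoc]
    exact mul_le_mul_of_nonneg_right (hbd E ⟨hV.1.trans hE.1, hE.2⟩).2
      (Real.rpow_nonneg (hs E hE) _)
  have lo : 0.996 * b * (∫ E in V..E₀, ((E₀ ^ 2 - E ^ 2) ^ n * E) * (E ^ 2 / V ^ 2 - 1) ^ (-1/2 : ℝ)) ≤
      ∫ E in V..E₀, φ (1 - E / E₀) * (E ^ 2 / V ^ 2 - 1) ^ (-1/2 : ℝ) := by
    rw [← intervalIntegral.integral_const_mul]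
    refine intervalIntegral.integral_mono_on hVE.le (j1.const_mul _) i1 ?_
    intro E hE
    rw [← mul_assoc]
    exact mul_le_mul_of_nonneg_right (hbd E ⟨hV.1.trans hE.1, hE.2⟩).1
      (Real.rpow_nonneg (hs E hE) _)
  have nn : 0 ≤ ∫ E in V..E₀, φ (1 - E / E₀) * (E ^ 2 / V ^ 2 - 1) ^ (-1/2 : ℝ) :=
    intervalIntegral.integral_nonneg hVE.le
      (fun E hE => mul_nonneg (hnn _) (Real.rpow_nonneg (hs E hE) _))
  have hS : 0 ≤ E₀ ^ 2 / V ^ 2 - 1 := hs E₀ ⟨hVE.le, le_rfl⟩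
  rw [hξ, hξ, mul_div_mul_left _ _ (by positivity)]
  have hR : 101 * (E₀ + V) * (E₀ - V) / (100 * (3 + 2 * (n : ℝ)) * V ^ 2) =
      1.01 * ((E₀ ^ 2 / V ^ 2 - 1) / (2 * n + 3)) := by
    field_simp; ring
  rw [hR]
  set S := E₀ ^ 2 / V ^ 2 - 1
  have hid' : (∫ E in V..E₀, ((E₀ ^ 2 - E ^ 2) ^ n * E) * (E ^ 2 / V ^ 2 - 1) ^ (1/2 : ℝ)) =
      S / (2 * n + 3) * ∫ E in V..E₀, ((E₀ ^ 2 - E ^ 2) ^ n * E) * (E ^ 2 / V ^ 2 - 1) ^ (-1/2 : ℝ) := by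
    rw [div_mul_eq_mul_div, eq_div_iff (by positivity), ← hid]; ring
  have hq : 0 ≤ S / (2 * n + 3) := by positivity
  refine div_le_of_le_mul₀ nn (by positivity) (up.trans ?_)
  rw [hid']
  have l2 := mul_le_mul_of_nonneg_left lo hq
  have l3 := mul_nonneg hq nn
  generalize S / (2 * n + 3) = q at *
  nlinarith
end

section
/- Fix E₀ > 0 and let φ : ℝ → ℝ be continuous, bounded, and nonnegative with φ(x) = 0 for x < 0. For κ ∈ {3/2, 1/2} define ξ_κ(V) = (4π/V) ∫_V^{E₀} φ(1 − E/E₀)(E²/V² − 1)^κ dE for V ∈ (0, E₀). Then ξ_{3/2} is differentiable on (0, E₀) and ξ_{3/2}′(V) = −(1/V)(4 ξ_{3/2}(V) + 3 ξ_{1/2}(V)). -/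
open MeasureTheory

lemma aux_rpow32 (y : ℝ) : y ^ (3/2 : ℝ) = y * √y := by
  rcases lt_or_ge y 0 with h | h
  · rw [Real.sqrt_eq_zero_of_nonpos h.le, Real.rpow_def_of_neg h]
    have : Real.cos (3/2 * Real.pi) = 0 := by
      rw [Real.cos_eq_zero_iff]
      exact ⟨1, by push_cast; ring⟩
    simp [this]
  · rw [show (3/2 : ℝ) = 1 + 1/2 by norm_num, Real.rpow_add_of_nonneg h (by norm_num) (by norm_num),
      Real.rpow_one, Real.sqrt_eq_rpow]

lemma aux_deriv (t x : ℝ) (hx : 0 < x) :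
    HasDerivAt (fun x : ℝ => (t ^ 2 / x ^ 2 - 1) ^ (3/2 : ℝ))
      (-3 * (t ^ 2 / x ^ 3) * √(t ^ 2 / x ^ 2 - 1)) x := by
  have h1 : HasDerivAt (fun x : ℝ => t ^ 2 / x ^ 2 - 1) (-2 * (t ^ 2 / x ^ 3)) x := by
    have := ((hasDerivAt_const x (t^2)).div (hasDerivAt_pow 2 x) (by positivity)).sub_const 1
    refine HasDerivAt.congr_deriv this ?_
    simp
    field_simp
  have h2 := h1.rpow_const (p := 3/2) (Or.inr (by norm_num))
  refine h2.congr_deriv ?_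
  rw [Real.sqrt_eq_rpow, show (3/2 - 1 : ℝ) = 1/2 by norm_num]
  ring

/-- First derivative formula of Lemma 4.6:
`ξ_{3/2}'(V) = -(1/V)(4 ξ_{3/2}(V) + 3 ξ_{1/2}(V))` on `(0, E₀)`. -/
theorem stmt_6 (E₀ : ℝ) (hE₀ : 0 < E₀) (φ : ℝ → ℝ)
    (hcont : Continuous φ) (hbd : ∃ M, ∀ x, |φ x| ≤ M)
    (hnn : ∀ x, 0 ≤ φ x) (hzero : ∀ x < (0 : ℝ), φ x = 0)
    (ξ : ℝ → ℝ → ℝ)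
    (hξ : ∀ κ V, ξ κ V =
      (4 * Real.pi / V) * ∫ E in V..E₀, φ (1 - E / E₀) * (E ^ 2 / V ^ 2 - 1) ^ κ) :
    ∀ V ∈ Set.Ioo (0 : ℝ) E₀,
      HasDerivAt (ξ (3/2)) (-(1 / V) * (4 * ξ (3/2) V + 3 * ξ (1/2) V)) V := by
  rintro V ⟨hV, hVE⟩
  obtain ⟨M, hM⟩ := hbd
  have hM0 : 0 ≤ M := (abs_nonneg _).trans (hM 0)
  have hc1 : ∀ x : ℝ, Continuous fun t : ℝ => φ (1 - t / E₀) * (t ^ 2 / x ^ 2 - 1) ^ (3/2 : ℝ) := by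
    intro x
    refine (hcont.comp (by fun_prop)).mul (Continuous.rpow_const (by fun_prop) ?_)
    intro t; right; norm_num
  have hc2 : ∀ x : ℝ, Continuous fun t : ℝ => φ (1 - t / E₀) * √(t ^ 2 / x ^ 2 - 1) := by
    intro x
    fun_prop
  have hc3 : ∀ x : ℝ, Continuous fun t : ℝ =>
      φ (1 - t / E₀) * (-3 * (t ^ 2 / x ^ 3) * √(t ^ 2 / x ^ 2 - 1)) := by
    intro x
    fun_prop
  have hzeroint : ∀ g : ℝ → ℝ, ∀ x > V / 2, (∀ t ≤ x, V / 2 < t → g t = 0) →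
      ∫ t in (V/2)..x, g t = 0 := by
    intro g x hx hg
    apply intervalIntegral.integral_zero_ae
    refine Filter.Eventually.of_forall fun t ht => ?_
    rw [Set.uIoc_of_le hx.le] at ht
    exact hg t ht.2 ht.1
  have hsq : ∀ x > V / 2, ∀ t ≤ x, V / 2 < t → √(t ^ 2 / x ^ 2 - 1) = 0 := by
    intro x hx t ht ht'
    apply Real.sqrt_eq_zero_of_nonpos
    have hx0 : 0 < x := by linarith
    have : t ^ 2 / x ^ 2 ≤ 1 := by
      rw [div_le_one (by positivity)]
      nlinarith
    linarith
  have key := (intervalIntegral.hasDerivAt_integral_of_dominated_loc_of_deriv_le (μ := volume)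
    (a := V / 2) (b := E₀) (x₀ := V) (s := Set.Ioi (V/2))
    (F := fun x t => φ (1 - t / E₀) * (t ^ 2 / x ^ 2 - 1) ^ (3/2 : ℝ))
    (F' := fun x t => φ (1 - t / E₀) * (-3 * (t ^ 2 / x ^ 3) * √(t ^ 2 / x ^ 2 - 1)))
    (bound := fun _ => M * (3 * (E₀ ^ 2 / (V/2) ^ 3) * √(E₀ ^ 2 / (V/2) ^ 2)))
    (Ioi_mem_nhds (by linarith))
    (Filter.Eventually.of_forall fun x => (hc1 x).aestronglyMeasurable)
    ((hc1 V).intervalIntegrable _ _) (hc3 V).aestronglyMeasurable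
    (Filter.Eventually.of_forall ?_) (by simp) (Filter.Eventually.of_forall ?_)).2
  rotate_left
  · intro t ht x hx
    rw [Set.uIoc_of_le (by linarith)] at ht
    obtain ⟨ht1, ht2⟩ := ht
    have hx' : V / 2 < x := hx
    have hx0 : 0 < x := by linarith
    have ht0 : 0 < t := by linarith
    have hV2 : 0 < V / 2 := by linarith
    rw [Real.norm_eq_abs, abs_mul, abs_mul, abs_mul, abs_of_nonneg (Real.sqrt_nonneg _),
      abs_of_nonneg (show 0 ≤ t ^ 2 / x ^ 3 by positivity), show |(-3:ℝ)| = 3 by norm_num]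
    have h1 : t ^ 2 / x ^ 3 ≤ E₀ ^ 2 / (V/2) ^ 3 := by gcongr
    have h2 : t ^ 2 / x ^ 2 - 1 ≤ E₀ ^ 2 / (V/2) ^ 2 := by
      have : t ^ 2 / x ^ 2 ≤ E₀ ^ 2 / (V/2) ^ 2 := by gcongr
      linarith
    have h3 := hM (1 - t / E₀)
    gcongr
  · intro t ht x hx
    have hx' : V / 2 < x := hx
    exact (aux_deriv t x (by linarith)).const_mul _
  -- reduce
  have e1 : ∀ x > V / 2, (∫ t in x..E₀, φ (1 - t / E₀) * (t ^ 2 / x ^ 2 - 1) ^ (3/2 : ℝ))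
      = ∫ t in (V/2)..E₀, φ (1 - t / E₀) * (t ^ 2 / x ^ 2 - 1) ^ (3/2 : ℝ) := by
    intro x hx
    rw [← intervalIntegral.integral_add_adjacent_intervals
      ((hc1 x).intervalIntegrable (V/2) x) ((hc1 x).intervalIntegrable x E₀),
      hzeroint _ x hx, zero_add]
    intro t ht ht'
    rw [aux_rpow32, hsq x hx t ht ht']; simp
  have e2 : (∫ t in (V/2)..E₀, φ (1 - t / E₀) * (-3 * (t ^ 2 / V ^ 3) * √(t ^ 2 / V ^ 2 - 1)))
      = -3 / V * ((∫ t in V..E₀, φ (1 - t / E₀) * (t ^ 2 / V ^ 2 - 1) ^ (3/2 : ℝ))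
        + ∫ t in V..E₀, φ (1 - t / E₀) * (t ^ 2 / V ^ 2 - 1) ^ (1/2 : ℝ)) := by
    simp_rw [← Real.sqrt_eq_rpow]
    rw [← intervalIntegral.integral_add ((hc1 V).intervalIntegrable _ _)
      ((hc2 V).intervalIntegrable _ _), ← intervalIntegral.integral_const_mul,
      ← intervalIntegral.integral_add_adjacent_intervals
      ((hc3 V).intervalIntegrable (V/2) V) ((hc3 V).intervalIntegrable V E₀),
      hzeroint _ V (by linarith), zero_add]
    · congr 1
      ext t
      rw [aux_rpow32]
      field_simp
      ring
    · intro t ht ht'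
      rw [hsq V (by linarith) t ht ht']; simp
  rw [e2] at key
  have key2 : HasDerivAt
      (fun x => ∫ t in x..E₀, φ (1 - t / E₀) * (t ^ 2 / x ^ 2 - 1) ^ (3/2 : ℝ)) _ V :=
    key.congr_of_eventuallyEq (by
      filter_upwards [Ioi_mem_nhds (show V / 2 < V by linarith)] with x hx
      exact e1 x hx)
  have key3 := ((hasDerivAt_const V (4 * Real.pi)).div (hasDerivAt_id V) hV.ne').mul key2
  have e3 : ξ (3/2) = fun x => (4 * Real.pi / x) *
      ∫ t in x..E₀, φ (1 - t / E₀) * (t ^ 2 / x ^ 2 - 1) ^ (3/2 : ℝ) := by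
    ext x; exact hξ _ x
  rw [hξ (3/2) V, hξ (1/2) V, e3]
  refine HasDerivAt.congr_deriv key3 ?_
  simp only [id, Pi.div_apply]
  field_simp
  ring
end

section
/- Fix E₀ > 0 and let φ : ℝ → ℝ be continuous, bounded, and nonnegative with φ(x) = 0 for x < 0. For κ ∈ {1/2, −1/2} define ξ_κ(V) = (4π/V) ∫_V^{E₀} φ(1 − E/E₀)(E²/V² − 1)^κ dE for V ∈ (0, E₀). Then ξ_{1/2} is differentiable on (0, E₀) and ξ_{1/2}′(V) = −(1/V)(2 ξ_{1/2}(V) + ξ_{−1/2}(V)). -/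
open MeasureTheory

lemma aux_lip (E₀ V₀ E V : ℝ) (hV₀ : 0 < V₀) (hV₀' : V₀ < E₀) (hE : 0 < E) (hE' : E ≤ E₀)
    (hne : E ≠ V₀) (hV : 0 < V) (hV' : V < E₀) :
    |√(E^2 - V^2) - √(E^2 - V₀^2)| ≤
      (2 * E₀ / √V₀ + √(2 * E₀)) * ((√(E - V₀))⁻¹ + (√(V₀ - E))⁻¹) * |V - V₀| := by
  have hs : 0 < √V₀ := Real.sqrt_pos.2 hV₀
  have hE₀ : 0 < E₀ := by linarith
  rcases lt_or_gt_of_ne hne with h | h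
  · have h0 : √(E^2 - V₀^2) = 0 := Real.sqrt_eq_zero_of_nonpos (by nlinarith)
    have h1 : √(E - V₀) = 0 := Real.sqrt_eq_zero_of_nonpos (by linarith)
    rw [h0, h1, sub_zero, abs_of_nonneg (Real.sqrt_nonneg _), inv_zero, zero_add]
    rcases le_or_gt E V with h2 | h2
    · rw [Real.sqrt_eq_zero_of_nonpos (by nlinarith)]
      positivity
    · have h3 : √(E^2 - V^2) ≤ √(2 * E₀) * √(V₀ - V) := by
        rw [← Real.sqrt_mul (by positivity)]
        apply Real.sqrt_le_sqrt
        nlinarith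
      have h4 : √(V₀ - V) ≤ (√(V₀ - E))⁻¹ * |V - V₀| := by
        rw [abs_of_neg (by linarith), neg_sub, inv_mul_eq_div,
          le_div_iff₀ (Real.sqrt_pos.2 (by linarith))]
        calc √(V₀ - V) * √(V₀ - E) ≤ √(V₀ - V) * √(V₀ - V) := by gcongr
          _ = V₀ - V := Real.mul_self_sqrt (by linarith)
      calc √(E^2 - V^2) ≤ √(2 * E₀) * √(V₀ - V) := h3
        _ ≤ √(2 * E₀) * ((√(V₀ - E))⁻¹ * |V - V₀|) := by gcongr
        _ ≤ (2 * E₀ / √V₀ + √(2 * E₀)) * ((√(V₀ - E))⁻¹ * |V - V₀|) := by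
          gcongr
          have : 0 ≤ 2 * E₀ / √V₀ := by positivity
          linarith
        _ = _ := by ring
  · have h1 : √(V₀ - E) = 0 := Real.sqrt_eq_zero_of_nonpos (by linarith)
    rw [h1, inv_zero, add_zero]
    have hb : 0 < E^2 - V₀^2 := by nlinarith
    have hd : 0 < √(E - V₀) := Real.sqrt_pos.2 (by linarith)
    have h2 : |√(E^2 - V^2) - √(E^2 - V₀^2)| * √(E^2 - V₀^2) ≤ 2 * E₀ * |V - V₀| := by
      have e1 : |√(E^2 - V^2) - √(E^2 - V₀^2)| * √(E^2 - V₀^2) ≤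
          |√(E^2 - V^2) - √(E^2 - V₀^2)| * (√(E^2 - V^2) + √(E^2 - V₀^2)) := by
        gcongr
        linarith [Real.sqrt_nonneg (E^2 - V^2)]
      refine e1.trans ?_
      rw [← abs_of_nonneg (add_nonneg (Real.sqrt_nonneg (E^2 - V^2))
        (Real.sqrt_nonneg (E^2 - V₀^2))), ← abs_mul]
      have e2 : (√(E^2 - V^2) - √(E^2 - V₀^2)) * (√(E^2 - V^2) + √(E^2 - V₀^2)) =
          √(E^2 - V^2) * √(E^2 - V^2) - (E^2 - V₀^2) := by
        rw [← Real.mul_self_sqrt hb.le]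
        simp only [Real.sqrt_mul_self (Real.sqrt_nonneg _)]
        ring
      have e3 : |√(E^2 - V^2) * √(E^2 - V^2) - (E^2 - V₀^2)| ≤ |V^2 - V₀^2| := by
        rcases le_or_gt V E with h3 | h3
        · rw [Real.mul_self_sqrt (by nlinarith), abs_sub_comm (V^2)]
          apply le_of_eq
          congr 1
          ring
        · rw [Real.sqrt_eq_zero_of_nonpos (by nlinarith), mul_zero, zero_sub, abs_neg,
            abs_of_pos hb, abs_of_pos (by nlinarith)]
          nlinarith
      rw [e2]
      refine e3.trans ?_
      rw [show V^2 - V₀^2 = (V + V₀) * (V - V₀) by ring, abs_mul,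
        abs_of_pos (by linarith : 0 < V + V₀)]
      gcongr
      linarith
    have h3 : √V₀ * √(E - V₀) ≤ √(E^2 - V₀^2) := by
      rw [← Real.sqrt_mul hV₀.le]
      apply Real.sqrt_le_sqrt
      nlinarith
    have h4 : |√(E^2 - V^2) - √(E^2 - V₀^2)| ≤ 2 * E₀ * |V - V₀| / (√V₀ * √(E - V₀)) := by
      rw [le_div_iff₀ (by positivity)]
      refine le_trans ?_ h2
      gcongr
    refine h4.trans ?_
    calc 2 * E₀ * |V - V₀| / (√V₀ * √(E - V₀))
        = (2 * E₀ / √V₀) * ((√(E - V₀))⁻¹ * |V - V₀|) := by field_simp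
      _ ≤ (2 * E₀ / √V₀ + √(2 * E₀)) * ((√(E - V₀))⁻¹ * |V - V₀|) := by
          gcongr
          linarith [Real.sqrt_nonneg (2 * E₀)]
      _ = _ := by ring

lemma aux_inv (x : ℝ) : x ^ (-1/2 : ℝ) = (√x)⁻¹ := by
  rcases le_or_gt 0 x with h | h
  · rw [Real.sqrt_eq_rpow, ← Real.rpow_neg h]
    norm_num
  · rw [Real.rpow_def_of_neg h, Real.sqrt_eq_zero_of_nonpos h.le,
      show (-1/2 : ℝ) * Real.pi = -(Real.pi / 2) by ring, Real.cos_neg, Real.cos_pi_div_two]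
    simp

lemma aux_int_s7 (a b c : ℝ) :
    IntervalIntegrable (fun x : ℝ => (√(x - c))⁻¹ + (√(c - x))⁻¹) volume a b := by
  have h : ∀ a b : ℝ, IntervalIntegrable (fun x : ℝ => (√x)⁻¹) volume a b := by
    intro a b
    simp_rw [← aux_inv]
    exact intervalIntegral.intervalIntegrable_rpow' (by norm_num)
  apply IntervalIntegrable.add
  · simpa using (h (a - c) (b - c)).comp_sub_right c
  · simpa using (h (c - a) (c - b)).comp_sub_left c

lemma aux_deriv_s7 (E V₀ : ℝ) (hV₀ : 0 < V₀) (hE : 0 < E) (hne : E ≠ V₀) :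
    HasDerivAt (fun V => √(E^2 - V^2)) (-V₀ / √(E^2 - V₀^2)) V₀ := by
  rcases lt_or_gt_of_ne hne with h | h
  · rw [Real.sqrt_eq_zero_of_nonpos (by nlinarith), div_zero]
    apply (hasDerivAt_const V₀ (0:ℝ)).congr_of_eventuallyEq
    filter_upwards [lt_mem_nhds h] with V hV
    exact Real.sqrt_eq_zero_of_nonpos (by nlinarith)
  · have h1 : HasDerivAt (fun V : ℝ => E^2 - V^2) (-(2 * V₀)) V₀ := by
      simpa using (hasDerivAt_pow 2 V₀).const_sub (E^2)
    convert h1.sqrt (by nlinarith) using 1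
    have : 0 < √(E^2 - V₀^2) := Real.sqrt_pos.2 (by nlinarith)
    field_simp

lemma aux_main (E₀ : ℝ) (f : ℝ → ℝ) (hf : Continuous f) (M : ℝ) (hM : ∀ x, |f x| ≤ M)
    (V₀ : ℝ) (hV₀ : 0 < V₀) (hV₀' : V₀ < E₀) :
    HasDerivAt (fun V => ∫ E in Set.Ioc 0 E₀, f E * √(E^2 - V^2))
      (∫ E in Set.Ioc 0 E₀, f E * (-V₀ / √(E^2 - V₀^2))) V₀ := by
  set μ := (volume : Measure ℝ).restrict (Set.Ioc 0 E₀) with hμ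
  let L : ℝ →L[ℝ] ℝ →L[ℝ] ℝ := ContinuousLinearMap.smulRightL ℝ ℝ ℝ 1
  let F' : ℝ → ℝ := fun E => f E * (-V₀ / √(E^2 - V₀^2))
  have hM0 : 0 ≤ M := (abs_nonneg _).trans (hM 0)
  have hm : AEStronglyMeasurable F' μ := by
    apply Measurable.aestronglyMeasurable
    have := hf.measurable
    fun_prop
  have hne : ∀ᵐ E ∂μ, E ≠ V₀ := ae_restrict_of_ae (by simp [ae_iff])
  have hmem : ∀ᵐ E ∂μ, E ∈ Set.Ioc 0 E₀ := ae_restrict_mem measurableSet_Ioc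
  have key := hasFDerivAt_integral_of_dominated_loc_of_lip' (μ := μ) (𝕜 := ℝ)
    (F := fun V E => f E * √(E^2 - V^2)) (F' := fun E => L (F' E)) (x₀ := V₀)
    (s := Set.Ioo 0 E₀)
    (bound := fun E => M * ((2 * E₀ / √V₀ + √(2 * E₀)) * ((√(E - V₀))⁻¹ + (√(V₀ - E))⁻¹)))
    (Ioo_mem_nhds hV₀ hV₀')
    (fun V _ => by
      apply Continuous.aestronglyMeasurable
      fun_prop)
    (by
      have : Continuous fun E => f E * √(E^2 - V₀^2) := by fun_prop
      exact (this.integrableOn_Icc (a := 0) (b := E₀)).mono_set Set.Ioc_subset_Icc_self)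
    (L.continuous.comp_aestronglyMeasurable hm)
    (by
      filter_upwards [hne, hmem] with E h1 h2 V hV
      rw [← mul_sub, norm_mul, mul_assoc]
      have := aux_lip E₀ V₀ E V hV₀ hV₀' h2.1 h2.2 h1 hV.1 hV.2
      simp only [Real.norm_eq_abs]
      exact mul_le_mul (hM E) this (abs_nonneg _) hM0)
    (by
      have := (aux_int_s7 0 E₀ V₀).1
      exact (this.const_mul _).const_mul _)
    (by
      filter_upwards [hne, hmem] with E h1 h2
      exact ((aux_deriv_s7 E V₀ hV₀ h2.1 h1).const_mul (f E)).hasFDerivAt)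
  obtain ⟨hi, key⟩ := key
  have hi' : Integrable F' μ := by
    have := hi.norm
    rw [← integrable_norm_iff hm]
    simpa [L] using this
  rw [ContinuousLinearMap.integral_comp_comm _ hi'] at key
  rw [hasDerivAt_iff_hasFDerivAt]
  exact key

lemma aux_set (E₀ V : ℝ) (hV : 0 < V) (hV' : V < E₀) (g h : ℝ → ℝ)
    (h0 : ∀ E, 0 < E → E ≤ V → g E = 0) (hgh : ∀ E, V < E → h E = g E) :
    ∫ E in V..E₀, h E = ∫ E in Set.Ioc 0 E₀, g E := by
  rw [intervalIntegral.integral_of_le hV'.le,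
    setIntegral_congr_fun measurableSet_Ioc (fun E hE => hgh E hE.1)]
  symm
  apply setIntegral_eq_of_subset_of_forall_sdiff_eq_zero measurableSet_Ioc
  · exact Set.Ioc_subset_Ioc_left hV.le
  · intro E hE
    apply h0 E hE.1.1
    by_contra hc
    exact hE.2 ⟨not_le.1 hc, hE.1.2⟩

/-- Second derivative formula of Lemma 4.6:
`ξ_{1/2}'(V) = -(1/V)(2 ξ_{1/2}(V) + ξ_{-1/2}(V))` on `(0, E₀)`. -/
theorem stmt_7 (E₀ : ℝ) (hE₀ : 0 < E₀) (φ : ℝ → ℝ)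
    (hcont : Continuous φ) (hbd : ∃ M, ∀ x, |φ x| ≤ M)
    (hnn : ∀ x, 0 ≤ φ x) (hzero : ∀ x < (0 : ℝ), φ x = 0)
    (ξ : ℝ → ℝ → ℝ)
    (hξ : ∀ κ V, ξ κ V =
      (4 * Real.pi / V) * ∫ E in V..E₀, φ (1 - E / E₀) * (E ^ 2 / V ^ 2 - 1) ^ κ) :
    ∀ V ∈ Set.Ioo (0 : ℝ) E₀,
      HasDerivAt (ξ (1/2)) (-(1 / V) * (2 * ξ (1/2) V + ξ (-1/2) V)) V := by
  intro V₀ hV₀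
  obtain ⟨M, hM⟩ := hbd
  have hsq : ∀ V E : ℝ, 0 < V → √(E^2 / V^2 - 1) = √(E^2 - V^2) / V := by
    intro V E hV
    rw [show E^2 / V^2 - 1 = (E^2 - V^2) / V^2 by field_simp, Real.sqrt_div' _ (by positivity),
      Real.sqrt_sq hV.le]
  have hhalf : ∀ V ∈ Set.Ioo 0 E₀, ξ (1/2) V =
      4 * Real.pi / V^2 * ∫ E in Set.Ioc 0 E₀, φ (1 - E / E₀) * √(E^2 - V^2) := by
    intro V hV
    have hVp := hV.1
    rw [hξ, aux_set E₀ V hV.1 hV.2 (fun E => V⁻¹ * (φ (1 - E / E₀) * √(E^2 - V^2))),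
      integral_const_mul]
    · field_simp
    · intro E h1 h2
      rw [Real.sqrt_eq_zero_of_nonpos (by nlinarith)]
      simp
    · intro E h1
      rw [← Real.sqrt_eq_rpow, hsq V E hV.1]
      field_simp
  have hneg : ξ (-1/2) V₀ =
      -(4 * Real.pi / V₀) * ∫ E in Set.Ioc 0 E₀, φ (1 - E / E₀) * (-V₀ / √(E^2 - V₀^2)) := by
    rw [hξ, aux_set E₀ V₀ hV₀.1 hV₀.2 (fun E => -(φ (1 - E / E₀) * (-V₀ / √(E^2 - V₀^2)))),
      integral_neg]
    · ring
    · intro E h1 h2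
      rw [Real.sqrt_eq_zero_of_nonpos (by nlinarith)]
      simp
    · intro E h1
      rw [aux_inv, hsq V₀ E hV₀.1, inv_div]
      ring
  have hmain := aux_main E₀ (fun E => φ (1 - E / E₀)) (by fun_prop) M (fun x => hM _)
    V₀ hV₀.1 hV₀.2
  have hV0 : V₀ ≠ 0 := hV₀.1.ne'
  have hc : HasDerivAt (fun V : ℝ => 4 * Real.pi / V^2) (-(8 * Real.pi / V₀^3)) V₀ := by
    refine HasDerivAt.congr_deriv ((hasDerivAt_const V₀ (4 * Real.pi)).div (hasDerivAt_pow 2 V₀)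
      (pow_ne_zero 2 hV0)) ?_
    simp only [zero_mul, zero_sub, Nat.cast_ofNat, Nat.add_one_sub_one, pow_one]
    field_simp
    norm_num
  have hp := hc.mul hmain
  have hfin : HasDerivAt (ξ (1/2)) _ V₀ := hp.congr_of_eventuallyEq (by
    filter_upwards [Ioo_mem_nhds hV₀.1 hV₀.2] with V hV
    exact hhalf V hV)
  convert hfin using 1
  rw [hhalf V₀ hV₀, hneg]
  field_simp
  ring
end

section
/- Fix E₀ > 0, let n ∈ ℕ with n ≤ 3, and let φ : ℝ → ℝ be nonnegative, vanish on (−∞, 0), be real-analytic on [0,1], and satisfy φ^{(k)}(0) = 0 for 0 ≤ k ≤ n−1 and φ^{(n)}(0) > 0. For κ ∈ {1/2, −1/2} define ξ_κ(V) = (4π/V) ∫_V^{E₀} φ(1 − E/E₀)(E²/V² − 1)^κ dE, and define ζ(V) = ζ₁(V) + ζ₂(V), where ζ₁(V) = 4π ∫_V^{E₀} φ′(1 − E/E₀) · ((E₀ − E)/(E₀(E₀ − V))) · (E²/V² − 1)^{−1/2} dE and ζ₂(V) = −(4π/(E₀ − V)) ∫_V^{E₀} φ(1 − E/E₀)(E²/V²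 − 1)^{−1/2}(E E₀/((E + V)V) − 1) dE. Then there exists V* ∈ (0, E₀) such that for all V ∈ (V*, E₀): | ξ_{1/2}(V) ζ(V) / ξ_{−1/2}(V)² | < 4/5. -/
open MeasureTheory

lemma phi_asymp (n : ℕ) (φ : ℝ → ℝ)
    (hnn : ∀ x, 0 ≤ φ x) 
    (hanalytic : AnalyticOn ℝ φ (Set.Icc 0 1))
    (hder : ∀ k < n, iteratedDerivWithin k φ (Set.Icc (0 : ℝ) 1) 0 = 0)
    (hdern : 0 < iteratedDerivWithin n φ (Set.Icc (0 : ℝ) 1) 0) (ε : ℝ) (hε : 0 < ε) :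
    ∃ b > 0, ∃ δ > 0, δ ≤ 1 ∧ ∀ x, 0 < x → x < δ → 
      (1 - ε) * b * x ^ n ≤ φ x ∧ φ x ≤ (1 + ε) * b * x ^ n ∧
      |deriv φ x * x| ≤ (n + ε) * b * x ^ n := by
  have h0 : (0:ℝ) ∈ Set.Icc (0:ℝ) 1 := by simp
  obtain ⟨g, hg0, hg, hga⟩ := (hanalytic 0 h0).exists_analyticAt
  rw [Set.insert_eq_of_mem h0] at hg
  have hit : ∀ k, iteratedDerivWithin k φ (Set.Icc (0 : ℝ) 1) 0 = iteratedDeriv k g 0 := by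
    intro k
    rw [iteratedDerivWithin_congr hg h0]
    exact iteratedDerivWithin_eq_iteratedDeriv (uniqueDiffOn_Icc one_pos) hga.contDiffAt h0
  have hord : analyticOrderAt g 0 = n := by
    rw [analyticOrderAt_eq_nat_iff_iteratedDeriv_eq_zero hga]
    exact ⟨fun k hk => by rw [← hit, hder k hk], by rw [← hit]; exact hdern.ne'⟩
  obtain ⟨h, hh, hh0, hgh⟩ := hga.analyticOrderAt_eq_natCast.1 hord
  simp only [sub_zero, smul_eq_mul] at hgh
  have hc : Filter.Tendsto h (nhds 0) (nhds (h 0)) := hh.continuousAt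
  have hφ : ∀ᶠ x in nhdsWithin (0:ℝ) (Set.Ioi 0), 0 < x ∧ x < 1 ∧ φ x = x ^ n * h x := by
    filter_upwards [self_mem_nhdsWithin, hgh.filter_mono nhdsWithin_le_nhds,
      (eventually_lt_nhds (show (0:ℝ) < 1 by norm_num)).filter_mono nhdsWithin_le_nhds] with x hx h1 h2
    exact ⟨hx, h2, by rw [hg ⟨le_of_lt hx, h2.le⟩, h1]⟩
  have hb : 0 < h 0 := by
    refine lt_of_le_of_ne ?_ hh0.symm
    refine ge_of_tendsto (hc.mono_left (nhdsWithin_le_nhds (s := Set.Ioi 0))) ?_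
    filter_upwards [hφ] with x ⟨hx, _, hx2⟩
    have := hnn x
    rw [hx2] at this
    exact nonneg_of_mul_nonneg_right this (pow_pos hx n)
  have hk : Filter.Tendsto (fun x => n * h x + x * deriv h x) (nhds 0) (nhds (n * h 0)) := by
    have : ContinuousAt (fun x => n * h x + x * deriv h x) 0 :=
      (continuousAt_const.mul hh.continuousAt).add (continuousAt_id.mul hh.deriv.continuousAt)
    simpa [ContinuousAt] using this
  have e1 : ∀ᶠ x in nhds (0:ℝ), (1 - ε) * h 0 < h x := hc.eventually_const_lt (by nlinarith)
  have e2 : ∀ᶠ x in nhds (0:ℝ), h x < (1 + ε) * h 0 := hc.eventually_lt_const (by nlinarith)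
  have e3 : ∀ᶠ x in nhds (0:ℝ), |n * h x + x * deriv h x| < (n + ε) * h 0 := by
    refine hk.abs.eventually_lt_const ?_
    rw [abs_of_nonneg (by positivity)]; nlinarith
  have e4 : ∀ᶠ x in nhds (0:ℝ), g x = x ^ n * h x := hgh
  have e5 := hh.eventually_analyticAt
  obtain ⟨δ, hδ, H⟩ := Metric.eventually_nhds_iff.1 (e1.and (e2.and (e3.and (e4.and e5))))
  refine ⟨h 0, hb, min δ 1, by positivity, min_le_right _ _, fun x hx hxd => ?_⟩
  have hx1 : x < 1 := hxd.trans_le (min_le_right _ _)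
  have hxδ : x < δ := hxd.trans_le (min_le_left _ _)
  obtain ⟨a1, a2, a3, a4, a5⟩ := @H x (by simpa [abs_of_pos hx] using hxδ)
  have hp := pow_pos hx n
  rw [hg ⟨hx.le, hx1.le⟩, a4]
  refine ⟨by nlinarith, by nlinarith, ?_⟩
  have : φ =ᶠ[nhds x] fun y => y ^ n * h y := by
    filter_upwards [Ioo_mem_nhds hx (lt_min hxδ hx1)] with y hy
    have hy1 : y < 1 := hy.2.trans_le (min_le_right _ _)
    have hyδ : y < δ := hy.2.trans_le (min_le_left _ _)
    rw [hg ⟨hy.1.le, hy1.le⟩]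
    exact (@H y (by simpa [abs_of_pos hy.1] using hyδ)).2.2.2.1
  rw [this.deriv_eq]
  have hd : HasDerivAt (fun y => y ^ n * h y) (n * x ^ (n-1) * h x + x ^ n * deriv h x) x :=
    (hasDerivAt_pow n x).mul a5.differentiableAt.hasDerivAt
  rw [hd.deriv]
  have : (n * x ^ (n-1) * h x + x ^ n * deriv h x) * x = (n * h x + x * deriv h x) * x ^ n := by
    rcases n with _ | m
    · simp; ring
    · simp [pow_succ]; ring
  rw [this, abs_mul, abs_of_pos hp]
  gcongr

lemma J_facts (n : ℕ) (V E₀ : ℝ) (h : V < E₀) :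
    IntervalIntegrable (fun E => (E₀ - E) ^ n * (E - V) ^ (-(1:ℝ)/2)) volume V E₀ ∧
    IntervalIntegrable (fun E => (E₀ - E) ^ n * (E - V) ^ ((1:ℝ)/2)) volume V E₀ ∧
    0 < (∫ E in V..E₀, (E₀ - E) ^ n * (E - V) ^ (-(1:ℝ)/2)) ∧
    (∫ E in V..E₀, (E₀ - E) ^ n * (E - V) ^ ((1:ℝ)/2)) =
      (E₀ - V) / (2 * n + 3) * ∫ E in V..E₀, (E₀ - E) ^ n * (E - V) ^ (-(1:ℝ)/2) := by
  have hint : ∀ r : ℝ, -1 < r → IntervalIntegrable (fun E => (E₀ - E) ^ n * (E - V) ^ r) volume V E₀ := by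
    intro r hr
    have := (intervalIntegral.intervalIntegrable_rpow' (a := 0) (b := E₀ - V) hr).comp_sub_right V
    simp only [zero_add, sub_add_cancel] at this
    exact this.continuousOn_mul (by fun_prop)
  have i1 := hint (-(1:ℝ)/2) (by norm_num)
  have i2 := hint ((1:ℝ)/2) (by norm_num)
  refine ⟨i1, i2, ?_, ?_⟩
  · refine intervalIntegral.intervalIntegral_pos_of_pos_on i1 (fun x hx => ?_) h
    have := sub_pos.2 hx.1
    have := sub_pos.2 hx.2
    positivity
  have key := intervalIntegral.integral_eq_sub_of_hasDerivAt_of_le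
    (f := fun E => (E₀ - E) ^ (n+1) * (E - V) ^ ((1:ℝ)/2))
    (f' := fun E => (E₀ - V) / 2 * ((E₀ - E) ^ n * (E - V) ^ (-(1:ℝ)/2)) - 
      (n + 3/2) * ((E₀ - E) ^ n * (E - V) ^ ((1:ℝ)/2))) h.le ?_ ?_ ((i1.const_mul _).sub (i2.const_mul _))
  · rw [intervalIntegral.integral_sub (i1.const_mul _) (i2.const_mul _),
      intervalIntegral.integral_const_mul, intervalIntegral.integral_const_mul] at key
    simp only [sub_self] at key
    rw [Real.zero_rpow (by norm_num), zero_pow (by simp)] at key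
    field_simp
    linarith
  · refine ContinuousOn.mul (by fun_prop) ?_
    exact ContinuousOn.rpow_const (by fun_prop) (fun x hx => Or.inr (by norm_num))
  · intro x hx
    have hxV := sub_pos.2 hx.1
    have h1 : HasDerivAt (fun E => (E₀ - E) ^ (n+1)) (((n+1:ℕ):ℝ) * (E₀ - x) ^ n * (-1)) x :=
      ((hasDerivAt_id x).const_sub E₀).pow (n+1)
    have h2 : HasDerivAt (fun E => (E - V) ^ ((1:ℝ)/2)) (1 * ((1:ℝ)/2) * (x - V) ^ ((1:ℝ)/2 - 1)) x :=
      ((hasDerivAt_id x).sub_const V).rpow_const (Or.inl hxV.ne')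
    have h3 := h1.mul h2
    refine HasDerivAt.congr_deriv h3 ?_
    symm
    have : (x - V) ^ ((1:ℝ)/2) = (x - V) * (x - V) ^ (-(1:ℝ)/2) := by
      nth_rw 2 [← Real.rpow_one (x - V)]
      rw [← Real.rpow_add hxV]; norm_num
    rw [this, show (1:ℝ)/2 - 1 = -1/2 by norm_num]
    push_cast
    ring

lemma w_facts (V E E₀ r : ℝ) (hV : 0 < V) (hE : V < E) (hE' : E < E₀) (hr : E₀ ≤ r * V) (hr3 : r ≤ 3 / 2) :
    (E ^ 2 / V ^ 2 - 1) ^ ((1:ℝ)/2) ≤ r * √(2 / E₀) * (E - V) ^ ((1:ℝ)/2) ∧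
    0 ≤ (E ^ 2 / V ^ 2 - 1) ^ ((1:ℝ)/2) ∧
    (E ^ 2 / V ^ 2 - 1) ^ (-(1:ℝ)/2) ≤ (√(2 / E₀))⁻¹ * (E - V) ^ (-(1:ℝ)/2) ∧
    r⁻¹ * (√(2 / E₀))⁻¹ * (E - V) ^ (-(1:ℝ)/2) ≤ (E ^ 2 / V ^ 2 - 1) ^ (-(1:ℝ)/2) ∧
    0 < (E ^ 2 / V ^ 2 - 1) ^ (-(1:ℝ)/2) ∧
    |E * E₀ / ((E + V) * V) - 1| ≤ 1 / 2 := by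
  have hE0 : 0 < E₀ := by linarith
  have hEV := sub_pos.2 hE
  have hr0 : 0 < r := by
    by_contra hc
    nlinarith
  have hw : E ^ 2 / V ^ 2 - 1 = (E - V) * ((E + V) / V ^ 2) := by field_simp; ring
  have hq : 0 < (E + V) / V ^ 2 := div_pos (by linarith) (by positivity)
  have hM : 0 < √(2 / E₀) := by positivity
  have hl : √(2 / E₀) ≤ √((E + V) / V ^ 2) := by
    apply Real.sqrt_le_sqrt
    rw [div_le_div_iff₀ hE0 (by positivity)]
    nlinarith
  have hu : √((E + V) / V ^ 2) ≤ r * √(2 / E₀) := by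
    rw [Real.sqrt_le_left (by positivity), mul_pow, Real.sq_sqrt (by positivity), ← mul_div_assoc,
      div_le_div_iff₀ (by positivity) hE0]
    have : E₀ ^ 2 ≤ (r * V) ^ 2 := by gcongr
    nlinarith
  have hs : 0 < √((E + V) / V ^ 2) := by positivity
  have p1 : (E ^ 2 / V ^ 2 - 1) ^ ((1:ℝ)/2) = √((E + V) / V ^ 2) * (E - V) ^ ((1:ℝ)/2) := by
    rw [hw, Real.mul_rpow hEV.le hq.le, mul_comm, ← Real.sqrt_eq_rpow]
  have p2 : (E ^ 2 / V ^ 2 - 1) ^ (-(1:ℝ)/2) = (√((E + V) / V ^ 2))⁻¹ * (E - V) ^ (-(1:ℝ)/2) := by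
    rw [hw, Real.mul_rpow hEV.le hq.le, mul_comm, Real.sqrt_eq_rpow, ← Real.rpow_neg hq.le]
    norm_num [neg_div]
  have d1 := Real.rpow_pos_of_pos hEV ((1:ℝ)/2)
  have d2 := Real.rpow_pos_of_pos hEV (-(1:ℝ)/2)
  rw [p1, p2]
  refine ⟨by gcongr, by positivity, by gcongr, ?_, by positivity, ?_⟩
  · rw [← mul_inv]; gcongr
  · have hD : 0 < (E + V) * V := by nlinarith
    rw [abs_le, neg_le_sub_iff_le_add, sub_le_iff_le_add, div_le_iff₀ hD, ← sub_le_iff_le_add,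
      le_div_iff₀ hD]
    constructor
    · nlinarith
    · have : E * E₀ ≤ E * (3 / 2 * V) := mul_le_mul_of_nonneg_left (by nlinarith) (by linarith)
      nlinarith

theorem stmt_8 (E₀ : ℝ) (hE₀ : 0 < E₀) (n : ℕ) (hn : n ≤ 3) (φ : ℝ → ℝ)
    (hnn : ∀ x, 0 ≤ φ x) (hzero : ∀ x < (0 : ℝ), φ x = 0)
    (hanalytic : AnalyticOn ℝ φ (Set.Icc 0 1))
    (hder : ∀ k < n, iteratedDerivWithin k φ (Set.Icc (0 : ℝ) 1) 0 = 0)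
    (hdern : 0 < iteratedDerivWithin n φ (Set.Icc (0 : ℝ) 1) 0)
    (ξ : ℝ → ℝ → ℝ)
    (hξ : ∀ κ V, ξ κ V =
      (4 * Real.pi / V) * ∫ E in V..E₀, φ (1 - E / E₀) * (E ^ 2 / V ^ 2 - 1) ^ κ)
    (ζ₁ ζ₂ ζ : ℝ → ℝ)
    (hζ₁ : ∀ V, ζ₁ V = 4 * Real.pi * ∫ E in V..E₀,
      deriv φ (1 - E / E₀) * ((E₀ - E) / (E₀ * (E₀ - V))) * (E ^ 2 / V ^ 2 - 1) ^ (-(1:ℝ)/2))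
    (hζ₂ : ∀ V, ζ₂ V = -(4 * Real.pi / (E₀ - V)) * ∫ E in V..E₀,
      φ (1 - E / E₀) * (E ^ 2 / V ^ 2 - 1) ^ (-(1:ℝ)/2) * (E * E₀ / ((E + V) * V) - 1))
    (hζ : ∀ V, ζ V = ζ₁ V + ζ₂ V) :
    ∃ Vs ∈ Set.Ioo (0 : ℝ) E₀, ∀ V ∈ Set.Ioo Vs E₀,
      |ξ (1/2) V * ζ V / (ξ (-1/2) V) ^ 2| < 4 / 5 := by
  obtain ⟨b, hb, δ, hδ, hδ1, H⟩ := phi_asymp n φ hnn hanalytic hder hdern (1/1000) (by norm_num)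
  have hm1 : max (E₀ / (1001/1000)) (E₀ * (1 - δ)) < E₀ := by
    apply max_lt
    · rw [div_lt_iff₀ (by norm_num)]; nlinarith
    · nlinarith
  refine ⟨_, ⟨lt_max_of_lt_left (by positivity), hm1⟩, fun V hV => ?_⟩
  obtain ⟨hV1, hVE⟩ := hV
  have hVr : E₀ / (1001/1000) < V := (le_max_left _ _).trans_lt hV1
  have hVd : E₀ * (1 - δ) < V := (le_max_right _ _).trans_lt hV1
  have hV0 : 0 < V := lt_trans (by positivity) hVr
  have hr : E₀ ≤ 1001/1000 * V := by
    rw [div_lt_iff₀ (by norm_num)] at hVr; linarith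
  clear hVr hV1 hm1
  have hD : 0 < E₀ - V := sub_pos.2 hVE
  obtain ⟨i1, i2, hJ, hK⟩ := J_facts n V E₀ hVE
  set J := ∫ E in V..E₀, (E₀ - E) ^ n * (E - V) ^ (-(1:ℝ)/2) with hJdef
  set M := √(2 / E₀) with hM
  have hM0 : 0 < M := by positivity
  have hM2 : M ^ 2 = 2 / E₀ := Real.sq_sqrt (by positivity)
  set a := b / E₀ ^ n with ha
  have ha0 : 0 < a := by positivity
  have W : ∀ E ∈ Set.Ioo V E₀, _ := fun E hE => w_facts V E E₀ (1001/1000) hV0 hE.1 hE.2 hr (by norm_num)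
  have P : ∀ E ∈ Set.Ioo V E₀,
      (999/1000) * (a * (E₀ - E) ^ n) ≤ φ (1 - E / E₀) ∧
      φ (1 - E / E₀) ≤ (1001/1000) * (a * (E₀ - E) ^ n) ∧
      |deriv φ (1 - E / E₀) * ((E₀ - E) / (E₀ * (E₀ - V)))| ≤
        (n + 1/1000) / (E₀ - V) * (a * (E₀ - E) ^ n) := by
    intro E hE
    have hx : 1 - E / E₀ = (E₀ - E) / E₀ := by field_simp
    have hEE := sub_pos.2 hE.2
    have hx1 : 0 < (E₀ - E) / E₀ := by positivity
    have hx2 : (E₀ - E) / E₀ < δ := by rw [div_lt_iff₀ hE₀]; nlinarith [hE.1]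
    have hbx : b * ((E₀ - E) / E₀) ^ n = a * (E₀ - E) ^ n := by
      rw [ha, div_pow]; ring
    obtain ⟨q1, q2, q3⟩ := H _ hx1 hx2
    rw [mul_assoc, hbx] at q1 q2 q3
    rw [hx]
    refine ⟨by linarith, by linarith, ?_⟩
    have : deriv φ ((E₀ - E) / E₀) * ((E₀ - E) / (E₀ * (E₀ - V))) =
      (deriv φ ((E₀ - E) / E₀) * ((E₀ - E) / E₀)) / (E₀ - V) := by field_simp
    rw [this, abs_div, abs_of_pos hD, div_mul_eq_mul_div]
    gcongr
  have bd : ∀ (f g : ℝ → ℝ), IntervalIntegrable g volume V E₀ → (∀ E ∈ Set.Ioo V E₀, |f E| ≤ g E) →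
      |∫ E in V..E₀, f E| ≤ ∫ E in V..E₀, g E := by
    intro f g hg hfg
    rw [← Real.norm_eq_abs]
    refine intervalIntegral.norm_integral_le_of_norm_le hVE.le ?_ hg
    filter_upwards [Measure.ae_ne volume E₀] with E hE hE2
    exact hfg E ⟨hE2.1, lt_of_le_of_ne hE2.2 hE⟩
  -- xi half
  have X1 : |∫ E in V..E₀, φ (1 - E / E₀) * (E ^ 2 / V ^ 2 - 1) ^ ((1:ℝ)/2)| ≤
      (1001/1000)^2 * a * M * ((E₀ - V) / (2 * n + 3) * J) := by
    rw [← hK, ← intervalIntegral.integral_const_mul]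
    refine bd _ _ (i2.const_mul _) fun E hE => ?_
    obtain ⟨w1, w2, w3, w4, w5, w6⟩ := W E hE
    obtain ⟨p1, p2, p3⟩ := P E hE
    have hEE := sub_pos.2 hE.2
    rw [abs_of_nonneg (mul_nonneg (hnn _) w2)]
    calc _ ≤ ((1001/1000) * (a * (E₀ - E) ^ n)) * (1001/1000 * M * (E - V) ^ ((1:ℝ)/2)) := by
          gcongr
      _ = _ := by ring
  have c1 : ∀ E ∈ Set.Ioo V E₀, |φ (1 - E / E₀) * (E ^ 2 / V ^ 2 - 1) ^ (-(1:ℝ)/2)| ≤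
      (1001/1000) * (a * M⁻¹) * ((E₀ - E) ^ n * (E - V) ^ (-(1:ℝ)/2)) := by
    intro E hE
    obtain ⟨w1, w2, w3, w4, w5, w6⟩ := W E hE
    obtain ⟨p1, p2, p3⟩ := P E hE
    have hEE := sub_pos.2 hE.2
    rw [abs_of_nonneg (mul_nonneg (hnn _) w5.le)]
    calc _ ≤ ((1001/1000) * (a * (E₀ - E) ^ n)) * (M⁻¹ * (E - V) ^ (-(1:ℝ)/2)) := by
          gcongr
      _ = _ := by ring
  have hint : IntervalIntegrable (fun E => φ (1 - E / E₀) * (E ^ 2 / V ^ 2 - 1) ^ (-(1:ℝ)/2))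
      volume V E₀ := by
    refine (i1.const_mul ((1001/1000) * (a * M⁻¹))).mono_fun' ?_ ?_
    · rw [Set.uIoc_of_le hVE.le]
      rw [← restrict_Ioo_eq_restrict_Ioc]
      refine ContinuousOn.aestronglyMeasurable ?_ measurableSet_Ioo
      refine ContinuousOn.mul ?_ ?_
      · refine ContinuousOn.comp (t := Set.Icc (0:ℝ) 1) (g := φ) (f := fun E => 1 - E / E₀) hanalytic.continuousOn (by fun_prop) ?_
        intro E hE
        have : E / E₀ ≤ 1 := by rw [div_le_one hE₀]; exact hE.2.le
        have : 0 ≤ E / E₀ := div_nonneg (hV0.trans hE.1).le hE₀.le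
        constructor <;> linarith
      · refine ContinuousOn.rpow_const (by fun_prop) fun E hE => Or.inl ?_
        have : 1 < E ^ 2 / V ^ 2 := by
          rw [one_lt_div (by positivity)]
          have := hE.1
          gcongr
        linarith
    · rw [Set.uIoc_of_le hVE.le, Filter.EventuallyLE, ae_restrict_iff' measurableSet_Ioc]
      filter_upwards [Measure.ae_ne volume E₀] with E hE hE2
      exact c1 E ⟨hE2.1, lt_of_le_of_ne hE2.2 hE⟩
  have X2 : (999/1000) * (1001/1000)⁻¹ * (a * M⁻¹ * J) ≤
      ∫ E in V..E₀, φ (1 - E / E₀) * (E ^ 2 / V ^ 2 - 1) ^ (-(1:ℝ)/2) := by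
    rw [← mul_assoc, hJdef, ← intervalIntegral.integral_const_mul]
    refine intervalIntegral.integral_mono_on_of_le_Ioo hVE.le (i1.const_mul _) hint fun E hE => ?_
    obtain ⟨w1, w2, w3, w4, w5, w6⟩ := W E hE
    obtain ⟨p1, p2, p3⟩ := P E hE
    have hEE := sub_pos.2 hE.2
    have hEV := sub_pos.2 hE.1
    calc _ = ((999/1000) * (a * (E₀ - E) ^ n)) * ((1001/1000)⁻¹ * M⁻¹ * (E - V) ^ (-(1:ℝ)/2)) := by
          ring
      _ ≤ _ := by
          apply mul_le_mul p1 w4 (by positivity) (hnn _)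
  have Z1 : |∫ E in V..E₀, deriv φ (1 - E / E₀) * ((E₀ - E) / (E₀ * (E₀ - V))) *
      (E ^ 2 / V ^ 2 - 1) ^ (-(1:ℝ)/2)| ≤ (n + 1/1000) / (E₀ - V) * a * M⁻¹ * J := by
    rw [hJdef, ← intervalIntegral.integral_const_mul]
    refine bd _ _ (i1.const_mul _) fun E hE => ?_
    obtain ⟨w1, w2, w3, w4, w5, w6⟩ := W E hE
    obtain ⟨p1, p2, p3⟩ := P E hE
    have hEE := sub_pos.2 hE.2
    rw [abs_mul, abs_of_pos w5]
    calc _ ≤ ((n + 1/1000) / (E₀ - V) * (a * (E₀ - E) ^ n)) * (M⁻¹ * (E - V) ^ (-(1:ℝ)/2)) := by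
          gcongr
      _ = _ := by ring
  have Z2 : |∫ E in V..E₀, φ (1 - E / E₀) * (E ^ 2 / V ^ 2 - 1) ^ (-(1:ℝ)/2) *
      (E * E₀ / ((E + V) * V) - 1)| ≤ (1001/2000) * a * M⁻¹ * J := by
    rw [hJdef, ← intervalIntegral.integral_const_mul]
    refine bd _ _ (i1.const_mul _) fun E hE => ?_
    obtain ⟨w1, w2, w3, w4, w5, w6⟩ := W E hE
    rw [abs_mul]
    calc _ ≤ _ := mul_le_mul (c1 E hE) w6 (abs_nonneg _) ((abs_nonneg _).trans (c1 E hE))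
      _ = _ := by ring
  set N := a * M⁻¹ * J with hN
  have hN0 : 0 < N := by positivity
  have hpi := Real.pi_pos
  have Z : |ζ V| ≤ 4 * Real.pi / (E₀ - V) * ((n + 1003/2000) * N) := by
    rw [hζ, hζ₁, hζ₂]
    refine (abs_add_le _ _).trans ?_
    rw [abs_mul (4 * Real.pi), abs_mul (-(4 * Real.pi / (E₀ - V))), abs_neg, abs_of_pos (show 0 < 4 * Real.pi by positivity),
      abs_of_pos (show 0 < 4 * Real.pi / (E₀ - V) by positivity)]
    calc _ ≤ 4 * Real.pi * ((n + 1/1000) / (E₀ - V) * a * M⁻¹ * J) +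
          4 * Real.pi / (E₀ - V) * ((1001/2000) * a * M⁻¹ * J) := by gcongr
      _ = _ := by rw [hN]; field_simp; ring
  have X : |ξ (1/2) V| ≤ 4 * Real.pi / V * ((1001/1000)^2 * (2 / E₀) * ((E₀ - V) / (2 * n + 3)) * N) := by
    rw [hξ, abs_mul, abs_of_pos (show 0 < 4 * Real.pi / V by positivity)]
    gcongr
    refine X1.trans (le_of_eq ?_)
    rw [← hM2, hN]; field_simp
  have Y : 4 * Real.pi / V * ((999/1001) * N) ≤ ξ (-1/2) V := by
    rw [hξ]
    gcongr
    refine le_trans (le_of_eq ?_) X2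
    ring
  have hY0 : 0 < 4 * Real.pi / V * ((999/1001) * N) := by positivity
  rw [abs_div, abs_mul, abs_of_nonneg (sq_nonneg (ξ (-1/2) V)), div_lt_iff₀ (pow_pos (hY0.trans_le Y) 2)]
  have Y2 : (4 * Real.pi / V * ((999/1001) * N)) ^ 2 ≤ ξ (-1/2) V ^ 2 := by gcongr
  have XZ := mul_le_mul X Z (abs_nonneg _) ((abs_nonneg _).trans X)
  have hQ : 0 < (4 * Real.pi / V * N) ^ 2 := by positivity
  have hn3 : (n + 1003/2000 : ℝ) / (2 * n + 3) ≤ 7/18 + 1/1000 := by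
    have : (n:ℝ) ≤ 3 := by exact_mod_cast hn
    rw [div_le_iff₀ (by positivity)]
    linarith
  have hVE1 : V / E₀ ≤ 1 := by rw [div_le_one hE₀]; exact hVE.le
  calc _ ≤ _ := XZ
    _ = (4 * Real.pi / V * N) ^ 2 * ((1001/1000)^2 * 2 * ((V / E₀) * ((n + 1003/2000 : ℝ) / (2 * n + 3)))) := by
        field_simp
    _ ≤ (4 * Real.pi / V * N) ^ 2 * ((1001/1000)^2 * 2 * (1 * (7/18 + 1/1000))) := by gcongr
    _ < 4 / 5 * (4 * Real.pi / V * ((999/1001) * N)) ^ 2 := by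
        rw [show 4 / 5 * (4 * Real.pi / V * ((999/1001) * N)) ^ 2 =
          (4 * Real.pi / V * N) ^ 2 * (4/5 * (999/1001)^2) by ring]
        exact mul_lt_mul_of_pos_left (by norm_num) hQ
    _ ≤ _ := by gcongr
end

section
/- Fix E₀ > 0 and let φ : ℝ → ℝ be continuous, bounded, and nonnegative with φ(x) = 0 for x < 0, and suppose there exists δ ∈ (0,1] with φ(x) > 0 for all x ∈ (0, δ). Define ξ_κ(V) = (4π/V) ∫_V^{E₀} φ(1 − E/E₀)(E²/V² − 1)^κ dE for κ ∈ {3/2, 1/2}, and set ρ(V) = ξ_{3/2}(V) + ξ_{1/2}(V) and p(V) = (1/3) ξ_{3/2}(V). Then both ρ and p are strictly decreasing on (0, E₀). -/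
open MeasureTheory

theorem xi_aux (E₀ : ℝ) (hE₀ : 0 < E₀) (φ : ℝ → ℝ)
    (hcont : Continuous φ) (hnn : ∀ x, 0 ≤ φ x)
    (δ : ℝ) (hδ : δ ∈ Set.Ioc (0 : ℝ) 1) (hpos : ∀ x ∈ Set.Ioo (0 : ℝ) δ, 0 < φ x)
    (κ : ℝ) (hκ : 0 ≤ κ) (a b : ℝ) (ha : 0 < a) (hab : a < b) (hb : b < E₀) :
    (4 * Real.pi / b) * (∫ E in b..E₀, φ (1 - E / E₀) * (E ^ 2 / b ^ 2 - 1) ^ κ) <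
    (4 * Real.pi / a) * ∫ E in a..E₀, φ (1 - E / E₀) * (E ^ 2 / a ^ 2 - 1) ^ κ := by
  have hb0 : 0 < b := ha.trans hab
  have hc : ∀ V : ℝ, Continuous (fun E : ℝ => φ (1 - E / E₀) * (E ^ 2 / V ^ 2 - 1) ^ κ) := by
    intro V
    refine Continuous.mul (by fun_prop) ?_
    exact Continuous.rpow_const (by fun_prop) (fun x => Or.inr hκ)
  have hbase : ∀ V E : ℝ, 0 < V → V ≤ E → 0 ≤ E ^ 2 / V ^ 2 - 1 := by
    intro V E hV hE
    rw [sub_nonneg, le_div_iff₀ (by positivity)]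
    nlinarith
  have hn : ∀ V E : ℝ, 0 < V → V ≤ E → 0 ≤ φ (1 - E / E₀) * (E ^ 2 / V ^ 2 - 1) ^ κ :=
    fun V E hV hE => mul_nonneg (hnn _) (Real.rpow_nonneg (hbase V E hV hE) _)
  have hIpos : 0 < ∫ E in b..E₀, φ (1 - E / E₀) * (E ^ 2 / b ^ 2 - 1) ^ κ := by
    refine intervalIntegral.integral_pos hb (hc b).continuousOn
      (fun x hx => hn b x hb0 hx.1.le) ?_
    have hq : 0 < 1 - b / E₀ := by
      rw [sub_pos, div_lt_one hE₀]; exact hb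
    obtain ⟨t, ht0, ht⟩ := exists_between (lt_min hδ.1 hq)
    obtain ⟨ht1, ht2⟩ := lt_min_iff.1 ht
    have hbE : b < E₀ * (1 - t) := by
      have h : b / E₀ < 1 - t := by linarith
      rw [div_lt_iff₀ hE₀] at h
      linarith
    refine ⟨E₀ * (1 - t), ⟨hbE.le, by nlinarith⟩, ?_⟩
    have e : 1 - E₀ * (1 - t) / E₀ = t := by field_simp; ring
    rw [e]
    refine mul_pos (hpos t ⟨ht0, ht1⟩) (Real.rpow_pos_of_pos ?_ _)
    rw [sub_pos, lt_div_iff₀ (by positivity)]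
    nlinarith
  have hle : (∫ E in b..E₀, φ (1 - E / E₀) * (E ^ 2 / b ^ 2 - 1) ^ κ) ≤
      ∫ E in a..E₀, φ (1 - E / E₀) * (E ^ 2 / a ^ 2 - 1) ^ κ := by
    rw [← intervalIntegral.integral_add_adjacent_intervals
      ((hc a).intervalIntegrable a b) ((hc a).intervalIntegrable b E₀)]
    have h1 : 0 ≤ ∫ E in a..b, φ (1 - E / E₀) * (E ^ 2 / a ^ 2 - 1) ^ κ :=
      intervalIntegral.integral_nonneg hab.le (fun x hx => hn a x ha hx.1)
    have h2 : (∫ E in b..E₀, φ (1 - E / E₀) * (E ^ 2 / b ^ 2 - 1) ^ κ) ≤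
        ∫ E in b..E₀, φ (1 - E / E₀) * (E ^ 2 / a ^ 2 - 1) ^ κ := by
      refine intervalIntegral.integral_mono_on hb.le ((hc b).intervalIntegrable _ _)
        ((hc a).intervalIntegrable _ _) (fun x hx => ?_)
      refine mul_le_mul_of_nonneg_left ?_ (hnn _)
      refine Real.rpow_le_rpow (hbase b x hb0 hx.1) ?_ hκ
      gcongr
    linarith
  have hpi := Real.pi_pos
  refine mul_lt_mul ?_ hle hIpos (by positivity)
  gcongr

/-- The energy density `ρ = ξ_{3/2} + ξ_{1/2}` and pressure `p = (1/3)ξ_{3/2}` of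
isotropic Vlasov matter are strictly decreasing functions of the lapse `V` on `(0, E₀)`. -/
theorem stmt_11 (E₀ : ℝ) (hE₀ : 0 < E₀) (φ : ℝ → ℝ)
    (hcont : Continuous φ) (hbd : ∃ M, ∀ x, |φ x| ≤ M)
    (hnn : ∀ x, 0 ≤ φ x) (hzero : ∀ x < (0 : ℝ), φ x = 0)
    (δ : ℝ) (hδ : δ ∈ Set.Ioc (0 : ℝ) 1) (hpos : ∀ x ∈ Set.Ioo (0 : ℝ) δ, 0 < φ x)
    (ξ : ℝ → ℝ → ℝ)
    (hξ : ∀ κ V, ξ κ V =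
      (4 * Real.pi / V) * ∫ E in V..E₀, φ (1 - E / E₀) * (E ^ 2 / V ^ 2 - 1) ^ κ)
    (ρ p : ℝ → ℝ)
    (hρ : ∀ V, ρ V = ξ (3/2) V + ξ (1/2) V)
    (hp : ∀ V, p V = (1/3) * ξ (3/2) V) :
    StrictAntiOn ρ (Set.Ioo (0 : ℝ) E₀) ∧ StrictAntiOn p (Set.Ioo (0 : ℝ) E₀) := by
  have key := fun κ hκ a b => xi_aux E₀ hE₀ φ hcont hnn δ hδ hpos κ hκ a b
  constructor
  · intro a ha b hb hab
    rw [hρ, hρ, hξ, hξ, hξ, hξ]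
    exact add_lt_add (key (3/2) (by norm_num) a b ha.1 hab hb.2)
      (key (1/2) (by norm_num) a b ha.1 hab hb.2)
  · intro a ha b hb hab
    rw [hp, hp, hξ, hξ]
    exact mul_lt_mul_of_pos_left (key (3/2) (by norm_num) a b ha.1 hab hb.2) (by norm_num)
end

section
/- Fix E₀ > 0 and let φ : ℝ → ℝ be continuous, bounded, and nonnegative with φ(x) = 0 for x < 0, and suppose there exists δ ∈ (0,1] with φ(x) > 0 for all x ∈ (0, δ). Define ξ_κ(V) = (4π/V) ∫_V^{E₀} φ(1 − E/E₀)(E²/V² − 1)^κ dE for κ ∈ {3/2, 1/2, −1/2}, and set ρ(V) = ξ_{3/2}(V) + ξ_{1/2}(V) and p(V) = (1/3) ξ_{3/2}(V). Then for every V ∈ (0, E₀), ρ′(V)/p′(V) = 3·(1 + (2 ξ_{1/2}(V) + ξ_{−1/2}(V)) / (4 ξ_{3/2}(V) + 3 ξ_{1/2}(V))). -/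
open MeasureTheory

lemma aux_int_s12 (κ R : ℝ) (hκ : -1 < κ) (hR : 1 ≤ R) :
    IntervalIntegrable (fun u : ℝ => (u ^ 2 - 1) ^ κ) volume 1 R := by
  have h1 : IntervalIntegrable (fun u : ℝ => (u - 1) ^ κ) volume 1 R := by
    have := (intervalIntegral.intervalIntegrable_rpow' (a := 0) (b := R - 1) hκ).comp_sub_right 1
    simpa using this
  have h2 : ContinuousOn (fun u : ℝ => (u + 1) ^ κ) (Set.uIcc 1 R) := by
    apply ContinuousOn.rpow_const (by fun_prop)
    intro x hx
    rw [Set.uIcc_of_le hR] at hx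
    left; linarith [hx.1]
  refine (h1.mul_continuousOn h2).congr_uIoo ?_
  intro u hu
  rw [Set.uIoo_of_le hR] at hu
  have : u ^ 2 - 1 = (u - 1) * (u + 1) := by ring
  simp only [this]
  rw [Real.mul_rpow (by linarith [hu.1]) (by linarith [hu.1])]

lemma aux_scale (κ R V E₀ : ℝ) (hκ : -1 < κ) (hV : 0 < V) (hVE : V ≤ E₀) (hR : E₀ ≤ V * R)
    (f : ℝ → ℝ) (hf : Continuous f) (hf0 : ∀ x, E₀ < x → f x = 0) :
    (4 * Real.pi / V) * ∫ E in V..E₀, f E * (E ^ 2 / V ^ 2 - 1) ^ κ =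
      4 * Real.pi * ∫ u in (1:ℝ)..R, f (V * u) * (u ^ 2 - 1) ^ κ := by
  have h1 : 1 ≤ E₀ / V := by rwa [one_le_div hV]
  have h2 : E₀ / V ≤ R := by rw [div_le_iff₀ hV]; linarith
  have hI : IntervalIntegrable (fun u : ℝ => f (V * u) * (u ^ 2 - 1) ^ κ) volume 1 (E₀ / V) :=
    (aux_int_s12 κ _ hκ h1).continuousOn_mul (by fun_prop)
  have hz : Set.EqOn (fun _ => (0:ℝ)) (fun u : ℝ => f (V * u) * (u ^ 2 - 1) ^ κ)
      (Set.uIoo (E₀ / V) R) := by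
    intro u hu
    rw [Set.uIoo_of_le h2] at hu
    have := hu.1
    rw [div_lt_iff₀ hV] at this
    simp [hf0 (V * u) (by linarith)]
  have hI2 : IntervalIntegrable (fun u : ℝ => f (V * u) * (u ^ 2 - 1) ^ κ) volume (E₀ / V) R :=
    (intervalIntegrable_const (c := (0:ℝ))).congr_uIoo hz
  rw [← intervalIntegral.integral_add_adjacent_intervals hI hI2,
    ← intervalIntegral.integral_congr_uIoo hz]
  have := intervalIntegral.integral_comp_mul_left (a := 1) (b := E₀ / V)
    (fun E => f E * (E ^ 2 / V ^ 2 - 1) ^ κ) hV.ne'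
  have e : V * (E₀ / V) = E₀ := by field_simp
  rw [e, mul_one, smul_eq_mul] at this
  have e2 : ∀ x : ℝ, (V * x) ^ 2 / V ^ 2 = x ^ 2 := fun x => by field_simp
  simp only [e2] at this
  rw [this]
  simp
  ring

lemma aux_deriv_s12 (κ R V₀ E₀ M : ℝ) (hκ : 0 < κ) (hV : 0 < V₀) (hR1 : 1 ≤ R) (hR : E₀ < V₀ * R)
    (f : ℝ → ℝ) (hf : Continuous f) (hM : ∀ x, |f x| ≤ M) (hf0 : ∀ x, E₀ < x → f x = 0)
    (J : ℝ → ℝ → ℝ) (hJ : ∀ κ V, J κ V = ∫ u in (1:ℝ)..R, f (V * u) * (u ^ 2 - 1) ^ κ) :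
    HasDerivAt (J κ) (-((1 + 2 * κ) * J κ V₀ + 2 * κ * J (κ - 1) V₀) / V₀) V₀ := by
  have hR0 : 0 < R := by linarith
  set Φ : ℝ → ℝ := fun x => ∫ t in E₀..x, f t with hΦ
  have hΦd : ∀ x, HasDerivAt Φ (f x) x := fun x =>
    intervalIntegral.integral_hasDerivAt_right (hf.intervalIntegrable _ _)
      hf.stronglyMeasurable.stronglyMeasurableAtFilter hf.continuousAt
  have hΦc : Continuous Φ := continuous_iff_continuousAt.2 fun x => (hΦd x).continuousAt
  have hΦ0 : ∀ x, E₀ ≤ x → Φ x = 0 := by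
    intro x hx
    have : Set.EqOn f (fun _ => (0:ℝ)) (Set.uIoo E₀ x) := by
      intro u hu
      rw [Set.uIoo_of_le hx] at hu
      exact hf0 u hu.1
    simp only [hΦ]
    rw [intervalIntegral.integral_congr_uIoo this]; simp
  set w' : ℝ → ℝ := fun u => 2 * κ * u * (u ^ 2 - 1) ^ (κ - 1) with hw'
  have hw'I : IntervalIntegrable w' volume 1 R :=
    (aux_int_s12 (κ - 1) R (by linarith) hR1).continuousOn_mul
      (g := fun u => 2 * κ * u) (by fun_prop)
  have hw : ∀ u : ℝ, 1 < u → HasDerivAt (fun u : ℝ => (u ^ 2 - 1) ^ κ) (w' u) u := by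
    intro u hu
    have hp : u ^ 2 - 1 ≠ 0 := by nlinarith
    have h := ((hasDerivAt_pow 2 u).sub_const 1).rpow_const (p := κ) (Or.inl hp)
    convert h using 1
    simp only [hw']; push_cast; ring
  have hwc : Continuous (fun u : ℝ => (u ^ 2 - 1) ^ κ) := by
    apply Continuous.rpow_const (by fun_prop)
    intro x; right; exact hκ.le
  have parts : ∀ V, E₀ < V * R → V * J κ V = - ∫ u in (1:ℝ)..R, Φ (V * u) * w' u := by
    intro V hVR
    have h := intervalIntegral.integral_mul_deriv_eq_deriv_mul_of_hasDerivAt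
      (a := 1) (b := R) (u := fun u => Φ (V * u)) (v := fun u : ℝ => (u ^ 2 - 1) ^ κ)
      (u' := fun u => f (V * u) * V) (v' := w')
      (by fun_prop) hwc.continuousOn
      (fun x _ => (hΦd (V * x)).comp x (by simpa using (hasDerivAt_id x).const_mul V))
      (fun x hx => hw x (by rw [min_eq_left hR1] at hx; exact hx.1))
      (Continuous.intervalIntegrable (by fun_prop) _ _) hw'I
    rw [h, hΦ0 _ hVR.le, hJ, ← intervalIntegral.integral_const_mul]
    have h0 : ((1:ℝ) ^ 2 - 1) ^ κ = 0 := by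
      rw [show (1:ℝ) ^ 2 - 1 = 0 by norm_num, Real.zero_rpow hκ.ne']
    simp only [h0, mul_zero, zero_mul, sub_zero, zero_sub, neg_neg]
    apply intervalIntegral.integral_congr
    intro u _
    ring
  have hK := intervalIntegral.hasDerivAt_integral_of_dominated_loc_of_deriv_le (𝕜 := ℝ)
    (μ := volume) (a := 1) (b := R) (x₀ := V₀) (s := Set.univ)
    (F := fun V u => Φ (V * u) * w' u) (F' := fun V u => f (V * u) * u * w' u)
    (bound := fun u => M * R * |w' u|) Filter.univ_mem
    (Filter.Eventually.of_forall fun V =>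
      (hw'I.continuousOn_mul (g := fun u => Φ (V * u)) (by fun_prop)).def'.aestronglyMeasurable)
    (hw'I.continuousOn_mul (g := fun u => Φ (V₀ * u)) (by fun_prop))
    ((hw'I.continuousOn_mul (g := fun u => f (V₀ * u) * u) (by fun_prop)).def'.aestronglyMeasurable)
    (Filter.Eventually.of_forall fun u hu V _ => by
      rw [Set.uIoc_of_le hR1] at hu
      rw [Real.norm_eq_abs, abs_mul, abs_mul]
      have : |u| ≤ R := by rw [abs_of_pos (by linarith [hu.1])]; exact hu.2
      have hM0 := (abs_nonneg _).trans (hM 0)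
      have := hM (V * u)
      gcongr)
    (hw'I.abs.const_mul _)
    (Filter.Eventually.of_forall fun u hu V _ => by
      have h := (hΦd (V * u)).comp V (h := fun V => V * u)
        (by simpa using (hasDerivAt_id V).mul_const u)
      exact h.mul_const _)
  have hK2 := hK.2
  have hval : ∫ u in (1:ℝ)..R, f (V₀ * u) * u * w' u = 2 * κ * (J κ V₀ + J (κ - 1) V₀) := by
    rw [hJ, hJ, ← intervalIntegral.integral_add
      ((aux_int_s12 κ R (by linarith) hR1).continuousOn_mul (g := fun u => f (V₀ * u)) (by fun_prop))
      ((aux_int_s12 (κ - 1) R (by linarith) hR1).continuousOn_mul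
        (g := fun u => f (V₀ * u)) (by fun_prop)),
      ← intervalIntegral.integral_const_mul]
    apply intervalIntegral.integral_congr_Ioo_of_le hR1
    intro u hu
    have hp : 0 < u ^ 2 - 1 := by nlinarith [hu.1]
    have : (u ^ 2 - 1) ^ κ = (u ^ 2 - 1) ^ (κ - 1) * (u ^ 2 - 1) := by
      rw [← Real.rpow_add_one hp.ne']; simp
    simp only [hw', this]; ring
  rw [hval] at hK2
  have h3 := hK2.neg.div (hasDerivAt_id V₀) hV.ne'
  have hev : J κ =ᶠ[nhds V₀] fun V => (- ∫ u in (1:ℝ)..R, Φ (V * u) * w' u) / V := by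
    have h1 : ∀ᶠ V in nhds V₀, 0 < V := lt_mem_nhds hV
    have h2 : ∀ᶠ V in nhds V₀, E₀ < V * R :=
      (continuous_id.mul continuous_const).continuousAt.eventually (lt_mem_nhds hR)
    filter_upwards [h1, h2] with V h1 h2
    rw [← parts V h2]; field_simp
  refine (HasDerivAt.congr_of_eventuallyEq h3 hev).congr_deriv ?_
  have := parts V₀ hR
  simp only [Pi.neg_apply, id]
  rw [← this]
  field_simp
  ring


/-- Formula for `dρ/dp = ρ'(V)/p'(V)` from the proof of Theorem 4.1:
`ρ'(V)/p'(V) = 3(1 + (2ξ_{1/2} + ξ_{-1/2})/(4ξ_{3/2} + 3ξ_{1/2}))`. -/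
theorem stmt_12 (E₀ : ℝ) (hE₀ : 0 < E₀) (φ : ℝ → ℝ)
    (hcont : Continuous φ) (hbd : ∃ M, ∀ x, |φ x| ≤ M)
    (hnn : ∀ x, 0 ≤ φ x) (hzero : ∀ x < (0 : ℝ), φ x = 0)
    (δ : ℝ) (hδ : δ ∈ Set.Ioc (0 : ℝ) 1) (hpos : ∀ x ∈ Set.Ioo (0 : ℝ) δ, 0 < φ x)
    (ξ : ℝ → ℝ → ℝ)
    (hξ : ∀ κ V, ξ κ V =
      (4 * Real.pi / V) * ∫ E in V..E₀, φ (1 - E / E₀) * (E ^ 2 / V ^ 2 - 1) ^ κ)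
    (ρ p : ℝ → ℝ)
    (hρ : ∀ V, ρ V = ξ (3/2) V + ξ (1/2) V)
    (hp : ∀ V, p V = (1/3) * ξ (3/2) V) :
    ∀ V ∈ Set.Ioo (0 : ℝ) E₀,
      deriv ρ V / deriv p V =
        3 * (1 + (2 * ξ (1/2) V + ξ (-1/2) V) / (4 * ξ (3/2) V + 3 * ξ (1/2) V)) := by
  intro V ⟨hV0, hVE⟩
  obtain ⟨M, hM⟩ := hbd
  set f : ℝ → ℝ := fun E => φ (1 - E / E₀) with hfd
  have hf : Continuous f := by fun_prop
  have hf0 : ∀ x, E₀ < x → f x = 0 := by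
    intro x hx
    apply hzero
    have : 1 < x / E₀ := by rwa [one_lt_div hE₀]
    linarith
  set R : ℝ := 2 * E₀ / V with hRd
  have hVR : V * R = 2 * E₀ := by rw [hRd]; field_simp
  have hR1 : 1 ≤ R := by rw [hRd, one_le_div hV0]; linarith
  set J : ℝ → ℝ → ℝ := fun κ V => ∫ u in (1:ℝ)..R, f (V * u) * (u ^ 2 - 1) ^ κ with hJd
  have hξJ : ∀ κ, -1 < κ → ∀ᶠ W in nhds V, ξ κ W = 4 * Real.pi * J κ W := by
    intro κ hκ
    have h1 : ∀ᶠ W in nhds V, 0 < W := lt_mem_nhds hV0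
    have h1' : ∀ᶠ W in nhds V, W < E₀ := gt_mem_nhds hVE
    have h2 : ∀ᶠ W in nhds V, E₀ < W * R :=
      (continuous_id.mul continuous_const).continuousAt.eventually
        (lt_mem_nhds (by show E₀ < V * R; linarith))
    filter_upwards [h1, h1', h2] with W h1 h1' h2
    rw [hξ]
    exact aux_scale κ R W E₀ hκ h1 h1'.le h2.le f hf hf0
  have hD : ∀ κ, 0 < κ → HasDerivAt (ξ κ) (-((1 + 2 * κ) * ξ κ V + 2 * κ * ξ (κ - 1) V) / V) V := by
    intro κ hκ
    have h := (aux_deriv_s12 κ R V E₀ M hκ hV0 hR1 (by linarith) f hf (fun x => hM _) hf0 J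
      (fun _ _ => rfl)).const_mul (4 * Real.pi)
    refine (h.congr_of_eventuallyEq (hξJ κ (by linarith))).congr_deriv ?_
    rw [(hξJ κ (by linarith)).self_of_nhds, (hξJ (κ - 1) (by linarith)).self_of_nhds]
    ring
  have hP : ∀ κ, 0 < κ → 0 < ξ κ V := by
    intro κ hκ
    rw [hξ]
    refine mul_pos (by positivity) ?_
    have hb : ∀ x, V < x → 0 < x ^ 2 / V ^ 2 - 1 := by
      intro x hx
      rw [sub_pos, one_lt_div (by positivity)]
      nlinarith
    have hm1 : max V (E₀ * (1 - δ)) < E₀ := max_lt hVE (by nlinarith [hδ.1])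
    obtain ⟨c, hc1, hc2⟩ := exists_between hm1
    have hcV := (le_max_left _ _).trans_lt hc1
    have hcδ := (le_max_right _ _).trans_lt hc1
    refine intervalIntegral.integral_pos hVE ?_ ?_ ⟨c, ⟨hcV.le, hc2.le⟩, ?_⟩
    · refine ContinuousOn.mul hf.continuousOn (ContinuousOn.rpow_const (by fun_prop) ?_)
      intro x _; right; exact hκ.le
    · intro x hx
      exact mul_nonneg (hnn _) (Real.rpow_nonneg (hb x hx.1).le _)
    · refine mul_pos (hpos _ ⟨?_, ?_⟩) (Real.rpow_pos_of_pos (hb c hcV) _)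
      · rw [sub_pos, div_lt_one hE₀]; exact hc2
      · rw [sub_lt_comm, lt_div_iff₀ hE₀]; linarith
  have d3 := hD (3/2) (by norm_num)
  have d1 := hD (1/2) (by norm_num)
  have p3 := hP (3/2) (by norm_num)
  have p1 := hP (1/2) (by norm_num)
  rw [show (3/2 - 1 : ℝ) = 1/2 by norm_num] at d3
  rw [show (1/2 - 1 : ℝ) = -1/2 by norm_num] at d1
  have eρ : ρ = fun V => ξ (3/2) V + ξ (1/2) V := funext hρ
  have ep : p = fun V => (1/3) * ξ (3/2) V := funext hp
  have dρ : deriv ρ V = -((1 + 2 * (3/2)) * ξ (3/2) V + 2 * (3/2) * ξ (1/2) V) / V +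
      -((1 + 2 * (1/2)) * ξ (1/2) V + 2 * (1/2) * ξ (-1/2) V) / V := by
    rw [eρ]; exact (d3.add d1).deriv
  have dp : deriv p V = 1/3 * (-((1 + 2 * (3/2)) * ξ (3/2) V + 2 * (3/2) * ξ (1/2) V) / V) := by
    rw [ep]; exact (d3.const_mul (1/3)).deriv
  rw [dρ, dp]
  have : 4 * ξ (3/2) V + 3 * ξ (1/2) V ≠ 0 := by positivity
  generalize ξ (3/2) V = a at *
  generalize ξ (1/2) V = b at *
  generalize ξ (-1/2) V = c at *
  have e1 : -((1 + 2 * (3/2)) * a + 2 * (3/2) * b) / V = -(4 * a + 3 * b) / V := by ring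
  rw [e1]
  field_simp
  ring
end

section
/- Fix E₀ > 0, let n ∈ ℕ with n ≤ 3, and let φ : ℝ → ℝ be nonnegative, vanish on (−∞, 0), be real-analytic on [0,1], and satisfy φ^{(k)}(0) = 0 for 0 ≤ k ≤ n−1 and φ^{(n)}(0) > 0. Define ξ_κ(V) = (4π/V) ∫_V^{E₀} φ(1 − E/E₀)(E²/V² − 1)^κ dE for κ ∈ {3/2, 1/2, −1/2}, ρ(V) = ξ_{3/2}(V) + ξ_{1/2}(V), p(V) = (1/3) ξ_{3/2}(V), κ(V) = ((ρ(V) + p(V))/(ρ(V) + 3p(V))) · (ρ′(V)/p′(V)), and I(V) = (1/5)κ(V)² + 2κ(V) + (ρ(V) + p(V)) · (κ′(V)/p′(V)). Then I(V) → −∞ as V → E₀ from the left; in particular there exists V₀ ∈ (0, E₀) such that I(V) ≤ 0 for all V ∈ [V₀, E₀). -/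
open MeasureTheory Filter Topology
open scoped ContDiff

lemma aux_param (w : ℝ → ℝ) (hw : Continuous w) (m : ℕ) : ∀ (G : ℝ × ℝ → ℝ), ContDiff ℝ ∞ G →
    ContDiff ℝ m (fun s => ∫ u in (0:ℝ)..1, w u * G (s, u)) := by
  have key : ∀ (G : ℝ × ℝ → ℝ), ContDiff ℝ ∞ G → ∀ s, 
      HasDerivAt (fun s => ∫ u in (0:ℝ)..1, w u * G (s, u))
        (∫ u in (0:ℝ)..1, w u * (fderiv ℝ G (s, u) (1, 0))) s := by
    intro G hG s
    have hG' : Continuous (fun q : ℝ × ℝ => w q.2 * (fderiv ℝ G q (1, 0))) := by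
      have : Continuous (fderiv ℝ G) := hG.continuous_fderiv (by simp)
      fun_prop
    have hGc := hG.continuous
    obtain ⟨C, hC⟩ := ((isCompact_Icc (a := s - 1) (b := s + 1)).prod
      (isCompact_Icc (a := (0:ℝ)) (b := 1))).exists_bound_of_continuousOn hG'.continuousOn
    refine (intervalIntegral.hasDerivAt_integral_of_dominated_loc_of_deriv_le 
      (F := fun s u => w u * G (s, u)) (F' := fun s u => w u * (fderiv ℝ G (s, u) (1, 0)))
      (bound := fun _ => C) (Icc_mem_nhds (a := s - 1) (b := s + 1) (by linarith) (by linarith)) 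
      ?_ ?_ ?_ ?_ ?_ ?_).2
    · exact Eventually.of_forall fun x => (by fun_prop : Continuous _).aestronglyMeasurable
    · exact (by fun_prop : Continuous _).intervalIntegrable _ _
    · exact (hG'.comp (by fun_prop : Continuous fun u : ℝ => (s, u))).aestronglyMeasurable
    · refine Eventually.of_forall fun u hu x hx => hC (x, u) ⟨hx, ?_⟩
      rw [Set.uIoc_of_le zero_le_one] at hu
      exact ⟨hu.1.le, hu.2⟩
    · exact intervalIntegrable_const
    · refine Eventually.of_forall fun u hu x hx => HasDerivAt.const_mul _ ?_
      have h1 : HasFDerivAt G (fderiv ℝ G (x, u)) (x, u) :=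
        (hG.differentiable (by simp) _).hasFDerivAt
      have h2 : HasDerivAt (fun x : ℝ => (x, u)) ((1:ℝ), (0:ℝ)) x :=
        (hasDerivAt_id x).prodMk (hasDerivAt_const x u)
      exact h1.comp_hasDerivAt x h2
  induction m with
  | zero =>
    intro G hG
    exact contDiff_zero.2 (continuous_iff_continuousAt.2 fun s => (key G hG s).continuousAt)
  | succ m ih =>
    intro G hG
    have hd : deriv (fun s => ∫ u in (0:ℝ)..1, w u * G (s, u)) = 
      fun s => ∫ u in (0:ℝ)..1, w u * (fderiv ℝ G (s, u) (1, 0)) := 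
      funext fun s => (key G hG s).deriv
    push_cast
    rw [contDiff_succ_iff_deriv]
    refine ⟨fun s => (key G hG s).differentiableAt, by simp, ?_⟩
    rw [hd]
    refine ih (fun q => fderiv ℝ G q (1, 0)) ?_
    exact (hG.fderiv_right (m := ∞) (by simp)).clm_apply contDiff_const

lemma aux_ext (f : ℝ → ℝ) (hf : AnalyticAt ℝ f 0) : 
    ∃ g : ℝ → ℝ, ContDiff ℝ ∞ g ∧ ∀ᶠ x in 𝓝 0, g x = f x := by
  obtain ⟨δ, hδ, h⟩ := Metric.eventually_nhds_iff.1 hf.eventually_analyticAt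
  let b : ContDiffBump (0:ℝ) := ⟨δ / 4, δ / 2, by linarith, by linarith⟩
  refine ⟨fun x => b x * f x, ?_, ?_⟩
  · rw [contDiff_iff_contDiffAt]
    intro x
    by_cases hx : dist x 0 < δ
    · exact b.contDiff.contDiffAt.mul (h hx).contDiffAt
    · have hx' : x ∉ tsupport (b : ℝ → ℝ) := by
        rw [b.tsupport_eq]
        simp only [Metric.mem_closedBall, not_le]
        change δ / 2 < _
        linarith
      have : (fun x => b x * f x) =ᶠ[𝓝 x] fun _ => 0 := by
        filter_upwards [notMem_tsupport_iff_eventuallyEq.1 hx'] with y hy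
        simp [hy]
      exact contDiffAt_const.congr_of_eventuallyEq this
  · filter_upwards [b.eventuallyEq_one] with x hx
    simp [hx]

lemma aux_phi (n : ℕ) (φ : ℝ → ℝ) (hnn : ∀ x, 0 ≤ φ x)
    (hanalytic : AnalyticOn ℝ φ (Set.Icc 0 1))
    (hder : ∀ k < n, iteratedDerivWithin k φ (Set.Icc (0 : ℝ) 1) 0 = 0)
    (hdern : 0 < iteratedDerivWithin n φ (Set.Icc (0 : ℝ) 1) 0) : 
    ∃ ψ : ℝ → ℝ, ContDiff ℝ ∞ ψ ∧ 0 < ψ 0 ∧ ∀ᶠ x in 𝓝 (0:ℝ), 0 ≤ x → φ x = x ^ n * ψ x := by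
  have h0 : (0:ℝ) ∈ Set.Icc (0:ℝ) 1 := by simp
  obtain ⟨g, hg0, hg, hga⟩ := (hanalytic 0 h0).exists_analyticAt
  rw [Set.insert_eq_of_mem h0] at hg
  have hk : ∀ k, iteratedDerivWithin k φ (Set.Icc (0 : ℝ) 1) 0 = iteratedDeriv k g 0 := by
    intro k
    rw [iteratedDerivWithin_congr hg h0]
    exact iteratedDerivWithin_eq_iteratedDeriv (uniqueDiffOn_Icc one_pos) hga.contDiffAt h0
  have ho : analyticOrderAt g 0 = n := by
    rw [analyticOrderAt_eq_nat_iff_iteratedDeriv_eq_zero hga]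
    exact ⟨fun k hkn => by rw [← hk, hder k hkn], by rw [← hk]; exact hdern.ne'⟩
  rw [hga.analyticOrderAt_eq_natCast] at ho
  obtain ⟨f, hfa, hf0, hf⟩ := ho
  obtain ⟨ψ, hψ, hψf⟩ := aux_ext f hfa
  have hev : ∀ᶠ x in 𝓝 (0:ℝ), 0 ≤ x → φ x = x ^ n * ψ x := by
    filter_upwards [hf, hψf, Iio_mem_nhds (zero_lt_one (α := ℝ))] with x h1 h2 h3 h4
    rw [hg ⟨h4, h3.le⟩, h1, h2]; simp
  refine ⟨ψ, hψ, ?_, hev⟩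
  have h1 : ψ 0 ≠ 0 := by rw [hψf.self_of_nhds]; exact hf0
  have h2 : 0 ≤ ψ 0 := by
    have ht : Tendsto ψ (𝓝[>] 0) (𝓝 (ψ 0)) := hψ.continuous.continuousAt.mono_left nhdsWithin_le_nhds
    refine ge_of_tendsto ht ?_
    filter_upwards [nhdsWithin_le_nhds hev, self_mem_nhdsWithin] with x hx (hx0 : 0 < x)
    have := hnn x
    rw [hx hx0.le] at this
    exact nonneg_of_mul_nonneg_right this (by positivity)
  exact lt_of_le_of_ne h2 h1.symm

lemma aux_xi (E₀ : ℝ) (hE₀ : 0 < E₀) (n : ℕ) (φ ψ : ℝ → ℝ) (hψ : ContDiff ℝ ∞ ψ) (hψ0 : 0 < ψ 0)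
    (hφ : ∀ᶠ x in 𝓝 (0:ℝ), 0 ≤ x → φ x = x ^ n * ψ x) (β : ℝ) (hβ : 0 < β) :
    ∃ G : ℝ → ℝ, ContDiffAt ℝ 2 G 0 ∧ 0 < G 0 ∧ ∀ᶠ s in 𝓝[>] (0:ℝ),
      (4 * Real.pi / (E₀ - E₀ * s)) * (∫ E in (E₀ - E₀ * s)..E₀, 
        φ (1 - E / E₀) * (E ^ 2 / (E₀ - E₀ * s) ^ 2 - 1) ^ β) = s ^ (n + β + 1) * G s := by
  have hχa : AnalyticAt ℝ (fun x : ℝ => (2 - x) ^ β) 0 := by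
    refine ContDiffAt.analyticAt ?_
    exact ContDiffAt.rpow_const_of_ne (by fun_prop) (by norm_num)
  obtain ⟨χ, hχ, hχe⟩ := aux_ext _ hχa
  have hχ0 : 0 < χ 0 := by rw [hχe.self_of_nhds]; positivity
  let w : ℝ → ℝ := fun u => u ^ n * (1 - u) ^ β
  have hw : Continuous w := by
    have : Continuous fun u : ℝ => (1 - u) ^ β := 
      (by fun_prop : Continuous fun u : ℝ => 1 - u).rpow_const fun _ => Or.inr hβ.le
    fun_prop
  let H : ℝ → ℝ := fun s => ∫ u in (0:ℝ)..1, w u * (ψ (s * u) * χ (s * (1 + u)))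
  have hH : ContDiff ℝ 2 H := by
    refine aux_param w hw 2 (fun q => ψ (q.1 * q.2) * χ (q.1 * (1 + q.2))) ?_
    exact (hψ.comp (by fun_prop)).mul (hχ.comp (by fun_prop))
  refine ⟨fun s => 4 * Real.pi * (1 - s)⁻¹ * (((1 - s) ^ 2)⁻¹) ^ β * H s, ?_, ?_, ?_⟩
  · refine ContDiffAt.mul (ContDiffAt.mul (ContDiffAt.mul contDiffAt_const ?_) ?_) hH.contDiffAt
    · exact ContDiffAt.inv (by fun_prop) (by norm_num)
    · exact ContDiffAt.rpow_const_of_ne (ContDiffAt.inv (by fun_prop) (by norm_num)) (by norm_num)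
  · have : 0 < H 0 := by
      refine intervalIntegral.intervalIntegral_pos_of_pos_on ?_ ?_ one_pos
      · refine Continuous.intervalIntegrable ?_ _ _
        simp only [zero_mul]
        fun_prop
      · intro u hu
        have h1 : 0 < 1 - u := by linarith [hu.2]
        have h2 := hu.1
        simp only [zero_mul, w]
        positivity
    have := Real.pi_pos
    simp only [sub_zero]
    positivity
  · obtain ⟨δ, hδ, h1⟩ := Metric.eventually_nhds_iff.1 hφ
    obtain ⟨η, hη, h2⟩ := Metric.eventually_nhds_iff.1 hχe
    have hm : (0:ℝ) < min δ (min (η/2) 1) := by positivity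
    filter_upwards [Ioo_mem_nhdsGT hm] with s hs
    obtain ⟨hs0, hs1⟩ := hs
    simp only [lt_min_iff] at hs1
    obtain ⟨hsδ, hsη, hs1⟩ := hs1
    have hc : E₀ * s ≠ 0 := by positivity
    have hsub := intervalIntegral.integral_comp_sub_mul (a := 0) (b := 1) 
      (fun E => φ (1 - E / E₀) * (E ^ 2 / (E₀ - E₀ * s) ^ 2 - 1) ^ β) hc E₀
    simp only [mul_zero, mul_one, sub_zero, smul_eq_mul] at hsub
    have hpt : ∀ u ∈ Set.uIcc (0:ℝ) 1, φ (1 - (E₀ - E₀ * s * u) / E₀) * 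
        ((E₀ - E₀ * s * u) ^ 2 / (E₀ - E₀ * s) ^ 2 - 1) ^ β = 
        (s ^ n * s ^ β * (((1 - s) ^ 2)⁻¹) ^ β) * (w u * (ψ (s * u) * χ (s * (1 + u)))) := by
      intro u hu
      rw [Set.uIcc_of_le zero_le_one] at hu
      obtain ⟨hu0, hu1⟩ := hu
      have e1 : 1 - (E₀ - E₀ * s * u) / E₀ = s * u := by field_simp; ring
      have h1s : 0 < 1 - s := by linarith
      have e2 : (E₀ - E₀ * s * u) ^ 2 / (E₀ - E₀ * s) ^ 2 - 1 = 
        s * (((1 - s) ^ 2)⁻¹) * (1 - u) * (2 - s * (1 + u)) := by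
        have : E₀ - E₀ * s = E₀ * (1 - s) := by ring
        rw [this]
        field_simp
        ring
      have h1u : 0 ≤ 1 - u := by linarith
      have hsu : s * u ≤ s := by nlinarith
      have hsu0 : 0 ≤ s * u := by positivity
      have h2u : 0 ≤ 2 - s * (1 + u) := by nlinarith
      rw [e1, e2, h1 (by rw [Real.dist_eq, sub_zero, abs_of_nonneg hsu0]; linarith) hsu0,
        Real.mul_rpow (by positivity) h2u, Real.mul_rpow (by positivity) h1u, 
        Real.mul_rpow hs0.le (by positivity), ← h2 (y := s * (1 + u)) 
          (by rw [Real.dist_eq, sub_zero, abs_of_nonneg (by positivity)]; nlinarith)]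
      simp only [w]
      ring
    rw [intervalIntegral.integral_congr hpt, intervalIntegral.integral_const_mul] at hsub
    have hsub' : (∫ E in (E₀ - E₀ * s)..E₀, 
        φ (1 - E / E₀) * (E ^ 2 / (E₀ - E₀ * s) ^ 2 - 1) ^ β) = 
        E₀ * s * ((s ^ n * s ^ β * (((1 - s) ^ 2)⁻¹) ^ β) * H s) := by
      rw [hsub]; field_simp
    rw [hsub', Real.rpow_add hs0, Real.rpow_add hs0, Real.rpow_one, Real.rpow_natCast]
    have h1s : 1 - s ≠ 0 := by linarith
    have : E₀ - E₀ * s = E₀ * (1 - s) := by ring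
    rw [this]
    field_simp

lemma aux_ev {Q : ℝ → Prop} (h : ∀ᶠ s in 𝓝[>] (0:ℝ), Q s) : 
    ∀ᶠ s in 𝓝[>] (0:ℝ), ∀ᶠ t in 𝓝 s, Q t := by
  filter_upwards [eventually_eventually_nhdsWithin.2 h, self_mem_nhdsWithin] with s hs (h0 : 0 < s)
  rwa [nhdsWithin_eq_nhds.2 (Ioi_mem_nhds h0)] at hs

lemma aux_core (a : ℝ) (ha : 0 < a) (ha5 : a < 5) (R P : ℝ → ℝ) (hR : ContDiffAt ℝ 2 R 0)
    (hP : ContDiffAt ℝ 2 P 0) (hR0 : 0 < R 0) (hP0 : 0 < P 0) (ρ p κ I : ℝ → ℝ)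
    (hρ : ∀ᶠ s in 𝓝[>] (0:ℝ), ρ s = s ^ a * R s)
    (hp : ∀ᶠ s in 𝓝[>] (0:ℝ), p s = s ^ (a + 1) * P s)
    (hκ : ∀ V, κ V = ((ρ V + p V) / (ρ V + 3 * p V)) * (deriv ρ V / deriv p V))
    (hI : ∀ V, I V = (1/5) * (κ V) ^ 2 + 2 * κ V + (ρ V + p V) * (deriv κ V / deriv p V)) :
    Tendsto I (𝓝[>] 0) atBot := by
  have hder : ∀ f : ℝ → ℝ, ContDiffAt ℝ 2 f 0 → ContDiffAt ℝ 1 (deriv f) 0 := fun f hf =>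
    (hf.fderiv_right (m := 1) (by norm_num)).clm_apply contDiffAt_const
  have hde : ∀ f : ℝ → ℝ, ContDiffAt ℝ 1 f 0 → ∀ᶠ s in 𝓝[>] (0:ℝ), HasDerivAt f (deriv f s) s := by
    intro f hf
    refine nhdsWithin_le_nhds ?_
    filter_upwards [hf.eventually (by simp)] with s hs
    exact (hs.differentiableAt (by simp)).hasDerivAt
  have dR := hder R hR
  have dP := hder P hP
  have hR1 : ContDiffAt ℝ 1 R 0 := hR.of_le (by norm_num)
  have hP1 : ContDiffAt ℝ 1 P 0 := hP.of_le (by norm_num)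
  let R1 : ℝ → ℝ := fun s => a * R s + s * deriv R s
  let P1 : ℝ → ℝ := fun s => (a + 1) * P s + s * deriv P s
  have cR1 : ContDiffAt ℝ 1 R1 0 := 
    (contDiffAt_const.mul hR1).add (contDiffAt_id.mul dR)
  have cP1 : ContDiffAt ℝ 1 P1 0 := 
    (contDiffAt_const.mul hP1).add (contDiffAt_id.mul dP)
  have hP10 : 0 < P1 0 := by simp only [P1, zero_mul, add_zero]; positivity
  let K : ℝ → ℝ := fun s => ((R s + s * P s) / (R s + 3 * s * P s)) * (R1 s / P1 s)
  have cK : ContDiffAt ℝ 1 K 0 := by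
    refine ContDiffAt.mul (ContDiffAt.div (hR1.add (contDiffAt_id.mul hP1)) 
      (hR1.add ((contDiffAt_const.mul contDiffAt_id).mul hP1)) ?_) (cR1.div cP1 hP10.ne')
    simpa using hR0.ne'
  have hK0 : K 0 = a * R 0 / ((a + 1) * P 0) := by
    simp only [K, R1, P1]; simp [hR0.ne']
  have cdK : ContinuousAt (deriv K) 0 := 
    ((cK.fderiv_right (m := 0) (by norm_num)).clm_apply contDiffAt_const).continuousAt
  have hP1pos : ∀ᶠ s in 𝓝[>] (0:ℝ), 0 < P1 s := 
    nhdsWithin_le_nhds (cP1.continuousAt.eventually (lt_mem_nhds hP10))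
  have hRpos : ∀ᶠ s in 𝓝[>] (0:ℝ), 0 < R s := 
    nhdsWithin_le_nhds (hR.continuousAt.eventually (lt_mem_nhds hR0))
  have hPpos : ∀ᶠ s in 𝓝[>] (0:ℝ), 0 < P s := 
    nhdsWithin_le_nhds (hP.continuousAt.eventually (lt_mem_nhds hP0))
  have hpos : ∀ᶠ s in 𝓝[>] (0:ℝ), 0 < s := self_mem_nhdsWithin
  have drpow : ∀ (b : ℝ) (f : ℝ → ℝ) (f' s : ℝ), 0 < s → HasDerivAt f f' s → 
      HasDerivAt (fun s => s ^ b * f s) (s ^ (b - 1) * (b * f s + s * f')) s := by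
    intro b f f' s hs hf
    have := (Real.hasDerivAt_rpow_const (p := b) (Or.inl hs.ne')).mul hf
    refine HasDerivAt.congr_deriv (f := fun s => s ^ b * f s) this ?_
    have : s ^ b = s ^ (b - 1) * s := by
      rw [← Real.rpow_add_one hs.ne']; simp
    rw [this]; ring
  have hρ' : ∀ᶠ s in 𝓝[>] (0:ℝ), deriv ρ s = s ^ (a - 1) * R1 s := by
    filter_upwards [aux_ev hρ, hpos, hde R hR1] with s h1 h2 h3
    rw [EventuallyEq.deriv_eq h1]
    exact (drpow a R _ s h2 h3).deriv
  have hp' : ∀ᶠ s in 𝓝[>] (0:ℝ), deriv p s = s ^ a * P1 s := by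
    filter_upwards [aux_ev hp, hpos, hde P hP1] with s h1 h2 h3
    rw [EventuallyEq.deriv_eq h1, (drpow (a+1) P _ s h2 h3).deriv]
    simp [P1]
  have hκ' : ∀ᶠ s in 𝓝[>] (0:ℝ), κ s = K s / s := by
    filter_upwards [hρ, hp, hρ', hp', hpos, hP1pos, hRpos, hPpos] with s h1 h2 h3 h4 h5 h6 h7 h8
    have e1 : s ^ a = s ^ (a - 1) * s := by
      rw [← Real.rpow_add_one h5.ne']; simp
    have e2 : s ^ (a + 1) = s ^ (a - 1) * s * s := by
      rw [Real.rpow_add_one h5.ne', e1]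
    have hx : 0 < s ^ (a - 1) := by positivity
    rw [hκ, h1, h2, h3, h4, e2, e1]
    simp only [K]
    generalize s ^ (a - 1) = x at hx
    have h9 : R s + 3 * s * P s ≠ 0 := by positivity
    have h10 : x * s * R s + 3 * (x * s * s * P s) = x * s * (R s + 3 * s * P s) := by ring
    have h11 : x * s * R s + x * s * s * P s = x * s * (R s + s * P s) := by ring
    rw [h10, h11]
    field_simp
  have hκd : ∀ᶠ s in 𝓝[>] (0:ℝ), deriv κ s = (deriv K s * s - K s) / s ^ 2 := by
    filter_upwards [aux_ev hκ', hpos, hde K cK] with s h1 h2 h3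
    rw [EventuallyEq.deriv_eq h1]
    have := (h3.div (hasDerivAt_id s) h2.ne').deriv
    simp only [id, mul_one] at this
    exact this
  let B : ℝ → ℝ := fun s => (1/5) * K s ^ 2 + 2 * s * K s + 
    (R s + s * P s) * ((deriv K s * s - K s) / P1 s)
  have hIB : ∀ᶠ s in 𝓝[>] (0:ℝ), B s * (s ^ 2)⁻¹ = I s := by
    filter_upwards [hρ, hp, hκd, hp', hpos, hP1pos, hκ'] with s h1 h2 h3 h4 h5 h6 h7
    have hx : 0 < s ^ a := by positivity
    rw [hI, h1, h2, h3, h4, h7, Real.rpow_add_one h5.ne']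
    simp only [B]
    generalize s ^ a = x at hx
    field_simp
  have cB : ContinuousAt B 0 := by
    have c1 := cK.continuousAt
    have c2 := hR.continuousAt
    have c3 := hP.continuousAt
    have c4 := cP1.continuousAt
    have c5 : ContinuousAt (fun s : ℝ => s) 0 := continuousAt_id
    exact ((continuousAt_const.mul (c1.pow 2)).add ((continuousAt_const.mul c5).mul c1)).add
      ((c2.add (c5.mul c3)).mul (((cdK.mul c5).sub c1).div c4 hP10.ne'))
  have hB0 : B 0 < 0 := by
    have : B 0 = (a * R 0 ^ 2 / ((a + 1) * P 0) ^ 2) * (a / 5 - 1) := by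
      simp only [B, P1, hK0]
      field_simp
      ring
    rw [this]
    exact mul_neg_of_pos_of_neg (by positivity) (by linarith)
  refine Tendsto.congr' hIB ?_
  refine Tendsto.neg_mul_atTop hB0 (cB.tendsto.mono_left nhdsWithin_le_nhds) ?_
  refine Tendsto.inv_tendsto_nhdsGT_zero ?_
  refine tendsto_nhdsWithin_iff.2 ⟨?_, ?_⟩
  · have : Tendsto (fun s : ℝ => s ^ 2) (𝓝 0) (𝓝 (0 ^ 2)) := (continuous_pow 2).tendsto 0
    simp only [ne_eq, OfNat.ofNat_ne_zero, not_false_eq_true, zero_pow] at this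
    exact this.mono_left nhdsWithin_le_nhds
  · filter_upwards [hpos] with s hs
    exact pow_pos hs 2

/-- Analytic core of Theorem 4.1: for an ansatz function φ satisfying (4.8) with
`n ≤ 3`, the Beig–Simon function `I` (parametrized by the lapse `V`) tends to `-∞`
as `V → E₀⁻`; in particular `I ≤ 0` on some interval `[V₀, E₀)`. -/
theorem stmt_14 (E₀ : ℝ) (hE₀ : 0 < E₀) (n : ℕ) (hn : n ≤ 3) (φ : ℝ → ℝ)
    (hnn : ∀ x, 0 ≤ φ x) (hzero : ∀ x < (0 : ℝ), φ x = 0)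
    (hanalytic : AnalyticOn ℝ φ (Set.Icc 0 1))
    (hder : ∀ k < n, iteratedDerivWithin k φ (Set.Icc (0 : ℝ) 1) 0 = 0)
    (hdern : 0 < iteratedDerivWithin n φ (Set.Icc (0 : ℝ) 1) 0)
    (ξ : ℝ → ℝ → ℝ)
    (hξ : ∀ κ V, ξ κ V =
      (4 * Real.pi / V) * ∫ E in V..E₀, φ (1 - E / E₀) * (E ^ 2 / V ^ 2 - 1) ^ κ)
    (ρ p κ I : ℝ → ℝ)
    (hρ : ∀ V, ρ V = ξ (3/2) V + ξ (1/2) V)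
    (hp : ∀ V, p V = (1/3) * ξ (3/2) V)
    (hκ : ∀ V, κ V = ((ρ V + p V) / (ρ V + 3 * p V)) * (deriv ρ V / deriv p V))
    (hI : ∀ V, I V = (1/5) * (κ V) ^ 2 + 2 * κ V + (ρ V + p V) * (deriv κ V / deriv p V)) :
    Tendsto I (nhdsWithin E₀ (Set.Iio E₀)) atBot ∧
      ∃ V₀ ∈ Set.Ioo (0 : ℝ) E₀, ∀ V ∈ Set.Ico V₀ E₀, I V ≤ 0 := by
  obtain ⟨ψ, hψ, hψ0, hφ⟩ := aux_phi n φ hnn hanalytic hder hdern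
  obtain ⟨G3, cG3, pG3, hG3⟩ := aux_xi E₀ hE₀ n φ ψ hψ hψ0 hφ (3/2) (by norm_num)
  obtain ⟨G1, cG1, pG1, hG1⟩ := aux_xi E₀ hE₀ n φ ψ hψ hψ0 hφ (1/2) (by norm_num)
  have hdc : ∀ (f : ℝ → ℝ) (s : ℝ), deriv (fun s => f (E₀ - E₀ * s)) s = 
      -E₀ * deriv f (E₀ - E₀ * s) := by
    intro f s
    have h1 := deriv_comp_mul_left E₀ (fun y => f (E₀ - y)) s
    rw [deriv_comp_const_sub] at h1
    simpa using h1
  have hrat : ∀ (f g : ℝ → ℝ) (s : ℝ), deriv (fun s => f (E₀ - E₀ * s)) s / 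
      deriv (fun s => g (E₀ - E₀ * s)) s = deriv f (E₀ - E₀ * s) / deriv g (E₀ - E₀ * s) := by
    intro f g s
    rw [hdc, hdc, mul_div_mul_left _ _ (by simpa using hE₀.ne')]
  have hnR : (n : ℝ) ≤ 3 := by exact_mod_cast hn
  have hT : Tendsto (fun s => I (E₀ - E₀ * s)) (𝓝[>] 0) atBot := by
    refine aux_core (n + 3/2) (by positivity) (by linarith) (fun s => G1 s + s * G3 s) 
      (fun s => (1/3) * G3 s) (cG1.add (contDiffAt_id.mul cG3)) (contDiffAt_const.mul cG3)
      (by simpa using pG1) (by simpa using pG3) (fun s => ρ (E₀ - E₀ * s)) 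
      (fun s => p (E₀ - E₀ * s)) (fun s => κ (E₀ - E₀ * s)) _ ?_ ?_ ?_ ?_
    · filter_upwards [hG3, hG1, self_mem_nhdsWithin] with s h3 h1 (h0 : 0 < s)
      rw [hρ, hξ, hξ, h3, h1, show (n:ℝ) + 3/2 + 1 = (n + 3/2) + 1 by ring, 
        show (n:ℝ) + 1/2 + 1 = n + 3/2 by ring, Real.rpow_add_one h0.ne']
      ring
    · filter_upwards [hG3] with s h3
      rw [hp, hξ, h3]
      ring
    · intro s
      rw [hrat, hκ]
    · intro s
      rw [hrat, hI]
  have hs : Tendsto (fun V => 1 - V / E₀) (𝓝[<] E₀) (𝓝[>] 0) := by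
    refine tendsto_nhdsWithin_iff.2 ⟨?_, ?_⟩
    · have : Tendsto (fun V => 1 - V / E₀) (𝓝 E₀) (𝓝 (1 - E₀ / E₀)) := 
        (by fun_prop : Continuous fun V : ℝ => 1 - V / E₀).tendsto E₀
      rw [div_self hE₀.ne', sub_self] at this
      exact this.mono_left nhdsWithin_le_nhds
    · filter_upwards [self_mem_nhdsWithin] with V (hV : V < E₀)
      have : V / E₀ < 1 := (div_lt_one hE₀).2 hV
      simpa using this
  have hmain : Tendsto I (𝓝[<] E₀) atBot := by
    refine (hT.comp hs).congr fun V => ?_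
    have : E₀ - E₀ * (1 - V / E₀) = V := by field_simp; ring
    simp only [Function.comp, this]
  refine ⟨hmain, ?_⟩
  have hev := (hmain.eventually_le_atBot 0).and (nhdsWithin_le_nhds (Ioi_mem_nhds hE₀))
  obtain ⟨l, hl, hsub⟩ := (mem_nhdsLT_iff_exists_Ioo_subset' hE₀).1 hev
  have hl' : l < E₀ := hl
  have hm : max l 0 < E₀ := max_lt hl' hE₀
  refine ⟨(max l 0 + E₀) / 2, ⟨?_, by linarith⟩, fun V hV => (hsub ⟨?_, hV.2⟩).1⟩
  · have := le_max_right l 0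
    linarith
  · have := le_max_left l 0
    have := hV.1
    linarith
end

section
/- Let K̃ > 0 and γ > 1, and consider the polytropic equation of state ρ(p) = K̃ · p^{1/γ} for p > 0. With κ(p) = ((ρ(p) + p)/(ρ(p) + 3p)) · ρ′(p) and I(p) = (1/5)κ(p)² + 2κ(p) + (ρ(p) + p)·κ′(p), one has lim_{p → 0⁺} p^{2(γ−1)/γ} · I(p) = −(5γ − 6)·K̃²/(5γ²). In particular, if γ > 6/5 then I(p) < 0 for all sufficiently small p > 0. -/
open Filter Topology

/-- For the polytropic equation of state `ρ(p) = K̃ p^{1/γ}` with `K̃ > 0`, `γ > 1`,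
one has `p^{2(γ-1)/γ} I(p) → -(5γ-6)K̃²/(5γ²)` as `p → 0⁺`; in particular, if
`γ > 6/5` then `I(p) < 0` for all sufficiently small `p > 0`. -/
theorem stmt_17 (K γ : ℝ) (hK : 0 < K) (hγ : 1 < γ)
    (ρ κ I : ℝ → ℝ)
    (hρ : ∀ p, ρ p = K * p ^ (1 / γ))
    (hκ : ∀ p, κ p = ((ρ p + p) / (ρ p + 3 * p)) * deriv ρ p)
    (hI : ∀ p, I p = (1/5) * (κ p) ^ 2 + 2 * κ p + (ρ p + p) * deriv κ p) :
    Tendsto (fun p => p ^ (2 * (γ - 1) / γ) * I p) (nhdsWithin 0 (Set.Ioi 0))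
        (nhds (-(5 * γ - 6) * K ^ 2 / (5 * γ ^ 2))) ∧
      (6 / 5 < γ → ∀ᶠ p in nhdsWithin 0 (Set.Ioi 0), I p < 0) := by
  have hγ0 : 0 < γ := by linarith
  obtain ⟨a, ha⟩ : ∃ a, a = 1 / γ := ⟨_, rfl⟩
  have ha0 : 0 < a := by rw [ha]; positivity
  have ha1 : a < 1 := by rw [ha, div_lt_one hγ0]; exact hγ
  rw [← ha] at hρ
  have hexp : 2 * (γ - 1) / γ = (1 - a) * 2 := by rw [ha]; field_simp
  have hs2 : ∀ p : ℝ, 0 < p → p ^ (2 * (γ - 1) / γ) = (p ^ (1 - a)) ^ 2 := by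
    intro p hp
    rw [hexp, Real.rpow_mul hp.le]; norm_cast
  have hus : ∀ p : ℝ, 0 < p → p ^ a * p ^ (1 - a) = p := by
    intro p hp
    rw [← Real.rpow_add hp]; simp
  have hρ' : ρ = fun p => K * p ^ a := funext hρ
  have hdρ : ∀ p : ℝ, 0 < p → deriv ρ p = K * a / p ^ (1 - a) := by
    intro p hp
    rw [hρ']
    have h := ((Real.hasDerivAt_rpow_const (x := p) (p := a) (Or.inl hp.ne')).const_mul K).deriv
    rw [h, show a - 1 = -(1 - a) by ring, Real.rpow_neg hp.le]
    field_simp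
  have hκ2 : ∀ p : ℝ, 0 < p → κ p = (K + p ^ (1 - a)) * (K * a) /
      ((K + 3 * p ^ (1 - a)) * p ^ (1 - a)) := by
    intro p hp
    have hs : 0 < p ^ (1 - a) := Real.rpow_pos_of_pos hp _
    have hu : 0 < p ^ a := Real.rpow_pos_of_pos hp _
    rw [hκ, hdρ p hp, hρ]
    have e := hus p hp
    have e1 : K * p ^ a + p = p ^ a * (K + p ^ (1 - a)) := by linear_combination -e
    have e2 : K * p ^ a + 3 * p = p ^ a * (K + 3 * p ^ (1 - a)) := by linear_combination -3 * e
    rw [e1, e2, mul_div_mul_left _ _ hu.ne', div_mul_div_comm]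
  have hdκ : ∀ p : ℝ, 0 < p → (ρ p + p) * deriv κ p =
      K * a * (1 - a) * (K + p ^ (1 - a)) * ((K + 3 * p ^ (1 - a)) * p ^ (1 - a) -
        (K + p ^ (1 - a)) * (K + 6 * p ^ (1 - a))) /
        ((K + 3 * p ^ (1 - a)) * p ^ (1 - a)) ^ 2 := by
    intro p hp
    have hs : 0 < p ^ (1 - a) := Real.rpow_pos_of_pos hp _
    have hu : 0 < p ^ a := Real.rpow_pos_of_pos hp _
    have hev : κ =ᶠ[𝓝 p] fun p => (K + p ^ (1 - a)) * (K * a) /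
      ((K + 3 * p ^ (1 - a)) * p ^ (1 - a)) := by
      filter_upwards [lt_mem_nhds hp] with q hq using hκ2 q hq
    have h := Real.hasDerivAt_rpow_const (x := p) (p := 1 - a) (Or.inl hp.ne')
    have hd := ((h.const_add K).mul_const (K * a)).div
      (((h.const_mul 3).const_add K).mul h) (by simp only [Pi.mul_apply]; positivity)
    rw [hev.deriv_eq]
    have hd' := hd.deriv
    simp only [Pi.mul_def, Pi.div_def] at hd'
    rw [hd', hρ, show (1 - a - 1) = -a by ring, Real.rpow_neg hp.le]
    have e := hus p hp
    have e1 : K * p ^ a + p = p ^ a * (K + p ^ (1 - a)) := by linear_combination -e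
    rw [e1]
    generalize p ^ (1 - a) = s at *
    generalize p ^ a = u at *
    field_simp
    ring
  have key : ∀ p : ℝ, 0 < p → p ^ (2 * (γ - 1) / γ) * I p =
      (fun s : ℝ => 1 / 5 * ((K + s) * (K * a) / (K + 3 * s)) ^ 2 +
        2 * s * ((K + s) * (K * a) / (K + 3 * s)) +
        K * a * (1 - a) * (K + s) * ((K + 3 * s) * s - (K + s) * (K + 6 * s)) /
          (K + 3 * s) ^ 2) (p ^ (1 - a)) := by
    intro p hp
    have hs : 0 < p ^ (1 - a) := Real.rpow_pos_of_pos hp _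
    rw [hs2 p hp, hI, hdκ p hp, hκ2 p hp]
    generalize p ^ (1 - a) = s at *
    simp only
    field_simp
  have hlim : Tendsto (fun p => p ^ (2 * (γ - 1) / γ) * I p) (nhdsWithin 0 (Set.Ioi 0))
        (nhds (-(5 * γ - 6) * K ^ 2 / (5 * γ ^ 2))) := by
    have hst : Tendsto (fun p : ℝ => p ^ (1 - a)) (nhdsWithin 0 (Set.Ioi 0)) (𝓝 0) := by
      have h := (Real.continuousAt_rpow_const (0 : ℝ) (1 - a) (Or.inr (by linarith))).tendsto
      rw [Real.zero_rpow (by linarith)] at h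
      exact h.mono_left nhdsWithin_le_nhds
    have hG : ContinuousAt (fun s : ℝ => 1 / 5 * ((K + s) * (K * a) / (K + 3 * s)) ^ 2 +
        2 * s * ((K + s) * (K * a) / (K + 3 * s)) +
        K * a * (1 - a) * (K + s) * ((K + 3 * s) * s - (K + s) * (K + 6 * s)) /
          (K + 3 * s) ^ 2) 0 := by
      have h0 : K + 3 * 0 ≠ 0 := by simpa using hK.ne'
      have h1 : (K + 3 * 0) ^ 2 ≠ 0 := pow_ne_zero _ h0
      fun_prop (disch := assumption)
    have h := hG.tendsto.comp hst
    refine Tendsto.congr' ?_ (h.trans (le_of_eq ?_))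
    · filter_upwards [self_mem_nhdsWithin] with p hp using (key p hp).symm
    · congr 1
      rw [ha]
      field_simp
      ring
  refine ⟨hlim, fun h65 => ?_⟩
  have hneg : -(5 * γ - 6) * K ^ 2 / (5 * γ ^ 2) < 0 := by
    apply div_neg_of_neg_of_pos _ (by positivity)
    exact mul_neg_of_neg_of_pos (by linarith) (by positivity)
  filter_upwards [hlim.eventually (gt_mem_nhds hneg), self_mem_nhdsWithin] with p h1 hp
  have : 0 < p ^ (2 * (γ - 1) / γ) := Real.rpow_pos_of_pos hp _
  exact (pos_iff_neg_of_mul_neg h1).1 this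
end

section
/- Let E₀ > 0, let n ≥ 0 be a real number, C > 0, and let φ : ℝ → ℝ be bounded, measurable, and nonnegative with φ(x) = 0 for x < 0 and lim_{x → 0⁺} x^{−n} φ(x) = C. Define ρ(V) = (4π/V³) ∫_V^{E₀} φ(1 − E/E₀) · E² √(E²/V² − 1) dE for V ∈ (0, E₀). Then lim_{V → E₀⁻} (E₀/V − 1)^{−(n + 3/2)} · ρ(V) = 4√2 · π · C · A_n, where A_n = √π · Γ(n+1) / (2 Γ(n + 5/2)). -/
open MeasureTheory Filter Topology

lemma beta_aux (n : ℝ) (hn : 0 ≤ n) : ∫ s in (0:ℝ)..1, s ^ n * Real.sqrt (1 - s) =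
    Real.sqrt Real.pi * Real.Gamma (n + 1) / (2 * Real.Gamma (n + 5/2)) := by
  have h1 := ProbabilityTheory.beta_eq_betaIntegralReal (n+1) (3/2) (by linarith) (by norm_num)
  have h2 : Complex.betaIntegral ((n+1 : ℝ) : ℂ) ((3/2 : ℝ) : ℂ)
      = ((∫ s in (0:ℝ)..1, s ^ n * Real.sqrt (1 - s) : ℝ) : ℂ) := by
    rw [Complex.betaIntegral, ← intervalIntegral.integral_ofReal]
    apply intervalIntegral.integral_congr
    intro s hs
    rw [Set.uIcc_of_le zero_le_one] at hs
    have a1 : (((n+1 : ℝ) : ℂ) - 1) = ((n : ℝ) : ℂ) := by push_cast; ring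
    have a2 : (((3/2 : ℝ) : ℂ) - 1) = ((1/2 : ℝ) : ℂ) := by push_cast; ring
    have a3 : (1 - (s:ℂ)) = ((1 - s : ℝ) : ℂ) := by push_cast; ring
    simp only [a1, a2, a3]
    rw [← Complex.ofReal_cpow hs.1, ← Complex.ofReal_cpow (by linarith [hs.2]), Real.sqrt_eq_rpow]
    push_cast; rfl
  rw [h2, Complex.ofReal_re] at h1
  rw [← h1, ProbabilityTheory.beta]
  have h3 : Real.Gamma (3/2) = Real.sqrt Real.pi / 2 := by
    rw [show (3/2:ℝ) = 1/2 + 1 by norm_num, Real.Gamma_add_one (by norm_num),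
      Real.Gamma_one_half_eq]; ring
  rw [h3, show n + 1 + 3/2 = n + 5/2 by ring]
  have : Real.Gamma (n+5/2) ≠ 0 := (Real.Gamma_pos_of_pos (by linarith)).ne'
  field_simp

lemma point_aux (E₀ n V s : ℝ) (φ : ℝ → ℝ) (hV : 0 < V) (hVE : V < E₀) (hs : 0 < s) (hs1 : s ≤ 1) :
    φ (1 - (E₀ - (E₀ - V) * s) / E₀) * (E₀ - (E₀ - V) * s) ^ 2 *
      Real.sqrt ((E₀ - (E₀ - V) * s) ^ 2 / V ^ 2 - 1) =
    (((E₀ - V) / E₀) ^ n * Real.sqrt (E₀ / V - 1)) *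
    ((((E₀ - V) / E₀ * s) ^ (-n) * φ ((E₀ - V) / E₀ * s)) * (s ^ n * Real.sqrt (1 - s)) *
      (E₀ - (E₀ - V) * s) ^ 2 * Real.sqrt ((E₀ - (E₀ - V) * s) / V + 1)) := by
  have hE : 0 < E₀ := hV.trans hVE
  have hc : 0 < (E₀ - V) / E₀ := div_pos (by linarith) hE
  have e1 : 1 - (E₀ - (E₀ - V) * s) / E₀ = (E₀ - V) / E₀ * s := by field_simp; ring
  have e2 : (E₀ - (E₀ - V) * s) ^ 2 / V ^ 2 - 1
      = (E₀ / V - 1) * (1 - s) * ((E₀ - (E₀ - V) * s) / V + 1) := by field_simp; ring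
  have h0 : 0 ≤ E₀ / V - 1 := by
    rw [sub_nonneg, le_div_iff₀ hV]; linarith
  rw [e1, e2, Real.sqrt_mul (mul_nonneg h0 (by linarith)), Real.sqrt_mul h0,
    Real.mul_rpow hc.le hs.le, Real.rpow_neg hc.le, Real.rpow_neg hs.le]
  have := (Real.rpow_pos_of_pos hc n).ne'
  have := (Real.rpow_pos_of_pos hs n).ne'
  field_simp

lemma const_aux (E₀ n V I : ℝ) (hV : 0 < V) (hVE : V < E₀) :
    (E₀ / V - 1) ^ (-(n + 3/2)) * ((4 * Real.pi / V ^ 3) * ((E₀ - V) *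
      ((((E₀ - V) / E₀) ^ n * Real.sqrt (E₀ / V - 1)) * I))) =
    4 * Real.pi / V ^ 2 * (V / E₀) ^ n * I := by
  have hE : 0 < E₀ := hV.trans hVE
  have h0 : 0 < E₀ / V - 1 := by
    rw [sub_pos, lt_div_iff₀ hV]; linarith
  have e1 : (E₀ - V) / E₀ = (E₀ / V - 1) * (V / E₀) := by field_simp
  have e2 : E₀ - V = (E₀ / V - 1) * V := by field_simp
  rw [e1, Real.mul_rpow h0.le (by positivity), e2]
  generalize E₀ / V - 1 = ε at h0
  rw [Real.rpow_neg h0.le, show n + 3/2 = n + (1 + 1/2) by ring, Real.rpow_add h0,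
    Real.rpow_add h0, Real.rpow_one, ← Real.sqrt_eq_rpow]
  have := (Real.rpow_pos_of_pos h0 n).ne'
  have := (Real.sqrt_pos.2 h0).ne'
  field_simp

theorem stmt_18 (E₀ : ℝ) (hE₀ : 0 < E₀) (n : ℝ) (hn : 0 ≤ n) (C : ℝ) (hC : 0 < C)
    (φ : ℝ → ℝ) (hmeas : Measurable φ) (hbd : ∃ M, ∀ x, |φ x| ≤ M)
    (hnn : ∀ x, 0 ≤ φ x) (hzero : ∀ x < (0 : ℝ), φ x = 0)
    (hlim : Tendsto (fun x => x ^ (-n) * φ x) (nhdsWithin 0 (Set.Ioi 0)) (nhds C))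
    (ρ : ℝ → ℝ)
    (hρ : ∀ V, ρ V = (4 * Real.pi / V ^ 3) * ∫ E in V..E₀,
        φ (1 - E / E₀) * E ^ 2 * Real.sqrt (E ^ 2 / V ^ 2 - 1)) :
    Tendsto (fun V => (E₀ / V - 1) ^ (-(n + 3/2)) * ρ V)
      (nhdsWithin E₀ (Set.Iio E₀))
      (nhds (4 * Real.sqrt 2 * Real.pi * C *
        (Real.sqrt Real.pi * Real.Gamma (n + 1) / (2 * Real.Gamma (n + 5/2))))) := by
  set F : ℝ → ℝ → ℝ := fun V s =>
    (((E₀ - V) / E₀ * s) ^ (-n) * φ ((E₀ - V) / E₀ * s)) * (s ^ n * Real.sqrt (1 - s)) *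
      (E₀ - (E₀ - V) * s) ^ 2 * Real.sqrt ((E₀ - (E₀ - V) * s) / V + 1) with hF
  have hlt : ∀ᶠ V in 𝓝[<] E₀, V < E₀ := eventually_mem_nhdsWithin
  have hgt : ∀ᶠ V in 𝓝[<] E₀, E₀ / 2 < V :=
    (lt_mem_nhds (by linarith)).filter_mono nhdsWithin_le_nhds
  have hEq : (fun V => 4 * Real.pi / V ^ 2 * (V / E₀) ^ n * ∫ s in (0:ℝ)..1, F V s)
      =ᶠ[𝓝[<] E₀] (fun V => (E₀ / V - 1) ^ (-(n + 3/2)) * ρ V) := by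
    filter_upwards [hlt, hgt] with V h1 h2
    have hV : 0 < V := by linarith
    rw [hρ, ← const_aux E₀ n V _ hV h1, ← intervalIntegral.integral_const_mul]
    have := intervalIntegral.smul_integral_comp_sub_mul (a := 0) (b := 1)
      (fun E => φ (1 - E / E₀) * E ^ 2 * Real.sqrt (E ^ 2 / V ^ 2 - 1)) (E₀ - V) E₀
    simp only [mul_one, mul_zero, sub_zero, sub_sub_cancel, smul_eq_mul] at this
    rw [← this]
    congr 3
    apply intervalIntegral.integral_congr_ae
    refine Eventually.of_forall fun s hs => ?_
    rw [Set.uIoc_of_le zero_le_one] at hs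
    exact (point_aux E₀ n V s φ hV h1 hs.1 hs.2).symm
  refine Tendsto.congr' hEq ?_
  have hI : Tendsto (fun V => ∫ s in (0:ℝ)..1, F V s) (𝓝[<] E₀)
      (𝓝 (∫ s in (0:ℝ)..1, C * (s ^ n * Real.sqrt (1 - s)) * E₀ ^ 2 * Real.sqrt 2)) := by
    have hb : ∀ᶠ x in 𝓝[>] (0:ℝ), |x ^ (-n) * φ x| ≤ C + 1 := by
      have := hlim.abs
      rw [abs_of_pos hC] at this
      exact this.eventually_le_const (by linarith)
    obtain ⟨η, hη, hb⟩ := (mem_nhdsGT_iff_exists_Ioo_subset).1 hb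
    have hη : 0 < η := hη
    have hclose : ∀ᶠ V in 𝓝[<] E₀, (E₀ - V) / E₀ < η := by
      have : Tendsto (fun V => (E₀ - V) / E₀) (𝓝[<] E₀) (𝓝 ((E₀ - E₀) / E₀)) :=
        (Continuous.tendsto (by fun_prop) E₀).mono_left nhdsWithin_le_nhds
      rw [sub_self, zero_div] at this
      exact this.eventually_lt_const hη
    apply intervalIntegral.tendsto_integral_filter_of_dominated_convergence
      (fun _ => (C + 1) * 1 * E₀ ^ 2 * Real.sqrt 3)
    · refine Eventually.of_forall fun V => ?_
      apply Measurable.aestronglyMeasurable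
      simp only [hF]
      fun_prop
    · filter_upwards [hlt, hgt, hclose] with V h1 h2 h3
      refine Eventually.of_forall fun s hs => ?_
      rw [Set.uIoc_of_le zero_le_one] at hs
      obtain ⟨hs0, hs1⟩ := hs
      have hV : 0 < V := by linarith
      have hc : 0 < (E₀ - V) / E₀ := div_pos (by linarith) hE₀
      have b1 := hb (show (E₀ - V) / E₀ * s ∈ Set.Ioo 0 η from
        ⟨by positivity, by nlinarith⟩)
      simp only [Set.mem_setOf_eq] at b1
      have p1 : 0 ≤ (E₀ - V) * s := mul_nonneg (by linarith) hs0.le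
      have p2 : (E₀ - V) * s ≤ E₀ - V := by nlinarith
      simp only [hF, norm_mul, Real.norm_eq_abs]
      rw [← abs_mul, abs_of_nonneg (Real.sqrt_nonneg ((E₀ - (E₀ - V) * s) / V + 1)),
        abs_of_nonneg (sq_nonneg (E₀ - (E₀ - V) * s)), ← abs_mul,
        abs_of_nonneg (by positivity : 0 ≤ s ^ n * √(1 - s))] 
      have b2 : s ^ n * √(1 - s) ≤ 1 :=
        mul_le_one₀ (Real.rpow_le_one hs0.le hs1 hn) (Real.sqrt_nonneg _)
          (Real.sqrt_le_one.2 (by linarith))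
      have b3 : (E₀ - (E₀ - V) * s) ^ 2 ≤ E₀ ^ 2 :=
        pow_le_pow_left₀ (by linarith) (by linarith) 2
      have b4 : √((E₀ - (E₀ - V) * s) / V + 1) ≤ √3 := by
        apply Real.sqrt_le_sqrt
        have : (E₀ - (E₀ - V) * s) / V ≤ 2 := by
          rw [div_le_iff₀ hV]; linarith
        linarith
      gcongr
    · exact intervalIntegrable_const
    · refine Eventually.of_forall fun s hs => ?_
      rw [Set.uIoc_of_le zero_le_one] at hs
      obtain ⟨hs0, hs1⟩ := hs
      have t1 : Tendsto (fun V => (E₀ - V) / E₀ * s) (𝓝[<] E₀) (𝓝[>] 0) := by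
        apply tendsto_nhdsWithin_of_tendsto_nhds_of_eventually_within
        · have : Tendsto (fun V => (E₀ - V) / E₀ * s) (𝓝[<] E₀) (𝓝 ((E₀ - E₀) / E₀ * s)) :=
            (Continuous.tendsto (by fun_prop) E₀).mono_left nhdsWithin_le_nhds
          simpa using this
        · filter_upwards [hlt] with V h1
          exact mul_pos (div_pos (by linarith) hE₀) hs0
      have t2 : Tendsto (fun V => (E₀ - (E₀ - V) * s) ^ 2) (𝓝[<] E₀) (𝓝 (E₀ ^ 2)) := by
        have : Tendsto (fun V => (E₀ - (E₀ - V) * s) ^ 2) (𝓝[<] E₀)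
            (𝓝 ((E₀ - (E₀ - E₀) * s) ^ 2)) :=
          (Continuous.tendsto (by fun_prop) E₀).mono_left nhdsWithin_le_nhds
        simpa using this
      have t3 : Tendsto (fun V => √((E₀ - (E₀ - V) * s) / V + 1)) (𝓝[<] E₀) (𝓝 (√2)) := by
        have hne := hE₀.ne'
        have : ContinuousAt (fun V => √((E₀ - (E₀ - V) * s) / V + 1)) E₀ := by
          fun_prop (disch := assumption)
        have := this.tendsto.mono_left (nhdsWithin_le_nhds (s := Set.Iio E₀))
        simp only [sub_self, zero_mul, sub_zero, div_self hne] at this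
        norm_num at this
        exact this
      exact (((hlim.comp t1).mul_const _).mul t2).mul t3
  have hP : Tendsto (fun V => 4 * Real.pi / V ^ 2 * (V / E₀) ^ n) (𝓝[<] E₀)
      (𝓝 (4 * Real.pi / E₀ ^ 2)) := by
    have hne := hE₀.ne'
    have : ContinuousAt (fun V => 4 * Real.pi / V ^ 2 * (V / E₀) ^ n) E₀ := by
      refine ContinuousAt.mul ?_ ?_
      · exact continuousAt_const.div (by fun_prop) (by positivity)
      · exact ContinuousAt.rpow_const (by fun_prop) (Or.inr hn)
    have := this.tendsto.mono_left (nhdsWithin_le_nhds (s := Set.Iio E₀))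
    simpa [div_self hne] using this
  convert hP.mul hI using 2
  rw [← beta_aux n hn]
  have : ∀ s : ℝ, C * (s ^ n * √(1 - s)) * E₀ ^ 2 * √2
      = (C * E₀ ^ 2 * √2) * (s ^ n * √(1 - s)) := fun s => by ring
  simp only [this, intervalIntegral.integral_const_mul]
  field_simp
end
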